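/- Let α ≥ α₀ (the constant from the existence result) and let u^{ε,R} ∈ C^∞(Ω̄_R^ε) be the k-convex solution of S_k(D²u) = 1 in Ω_R^ε, u = 0 on ∂B_ε(x₀), u = ū on ∂E_R(0). Then ū(x) ≤ u^{ε,R}(x) ≤ ½xᵀAx + μ(α) for all x ∈ Ω_R^ε, where μ(α) = ∫_{R₀}^{∞} ((1 + α t^{−k/(2h_k(a))})^{1/k} − 1) dt − R₀. -/

import Mathlib

open scoped Classical Topology
open Real Filter MeasureTheory

noncomputable section

/-- Euclidean space ℝⁿ. -/
abbrev Euc (n : ℕ) : Type := EuclideanSpace ℝ (Fin n)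

/-- The standard basis vector `e i`. -/
def ebasis (n : ℕ) (i : Fin n) : Euc n := EuclideanSpace.single i 1

/-- The Hessian matrix `D²u(x)`. -/
def hessMat (n : ℕ) (u : Euc n → ℝ) (x : Euc n) : Matrix (Fin n) (Fin n) ℝ :=
  Matrix.of fun i j => iteratedFDeriv ℝ 2 u x ![ebasis n i, ebasis n j]

/-- The Laplacian `Δu(x)` (trace of the Hessian). -/
def lapl (n : ℕ) (u : Euc n → ℝ) (x : Euc n) : ℝ := ∑ i, hessMat n u x i i

/-- The `k`-th elementary symmetric function of the eigenvalues of an `n × n` matrix,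
expressed through the coefficients of the characteristic polynomial. -/
def matSk (n k : ℕ) (M : Matrix (Fin n) (Fin n) ℝ) : ℝ :=
  (-1 : ℝ) ^ k * (Matrix.charpoly M).coeff (n - k)

/-- `S_k(D²u)(x)`. -/
def SkHess (n k : ℕ) (u : Euc n → ℝ) (x : Euc n) : ℝ := matSk n k (hessMat n u x)

/-- `u` is `k`-convex on `U`: the eigenvalues of the Hessian lie in the Gårding cone `Γ_k`. -/
def KConvexOn (n k : ℕ) (u : Euc n → ℝ) (U : Set (Euc n)) : Prop :=
  ∀ x ∈ U, ∀ j : ℕ, 1 ≤ j → j ≤ k → 0 < matSk n j (hessMat n u x)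

/-- Membership in the class `𝒜_k`: symmetric positive definite with `S_k(λ(A)) = 1`. -/
def MemA (n k : ℕ) (A : Matrix (Fin n) (Fin n) ℝ) : Prop :=
  A.IsSymm ∧ A.PosDef ∧ matSk n k A = 1

/-- The quadratic form `½ xᵀ A x`. -/
def quadA (n : ℕ) (A : Matrix (Fin n) (Fin n) ℝ) (x : Euc n) : ℝ :=
  (1 / 2) * ∑ i, ∑ j, x i * A i j * x j

/-- The linear form `b ⋅ x`. -/
def linB (n : ℕ) (b x : Euc n) : ℝ := ∑ i, b i * x i

/-- `λ_max(A) < c`, expressed through the quadratic form (for symmetric `A`). -/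
def lambdaMaxLT (n : ℕ) (A : Matrix (Fin n) (Fin n) ℝ) (c : ℝ) : Prop :=
  ∀ x : Euc n, x ≠ 0 → ∑ i, ∑ j, x i * A i j * x j < c * ‖x‖ ^ 2

/-- `u` is smooth on an open neighbourhood of the (closed) set `S`;
this is our rendering of `u ∈ C^∞(S)` for a closed set `S`. -/
def SmoothOnNhd (n : ℕ) (u : Euc n → ℝ) (S : Set (Euc n)) : Prop :=
  ∃ U : Set (Euc n), IsOpen U ∧ S ⊆ U ∧ ContDiffOn ℝ (⊤ : ℕ∞) u U

/-- A smooth bounded strictly convex domain in ℝⁿ. -/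
def SmoothStrictConvexDomain (n : ℕ) (Ω : Set (Euc n)) : Prop :=
  IsOpen Ω ∧ Bornology.IsBounded Ω ∧ Ω.Nonempty ∧ Convex ℝ Ω ∧ StrictConvex ℝ Ω ∧
    ∃ f : Euc n → ℝ, ContDiff ℝ (⊤ : ℕ∞) f ∧ Ω = {x | f x < 0} ∧
      ∀ x ∈ frontier Ω, fderiv ℝ f x ≠ 0

/-- Extension of `u` by the constant value `v` inside `Ω`. -/
def extBy (n : ℕ) (Ω : Set (Euc n)) (v : ℝ) (u : Euc n → ℝ) : Euc n → ℝ :=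
  fun x => if x ∈ Ω then v else u x

/-- `u` (vanishing on `∂Ω`) is quasiconvex: all sublevel sets of its zero-extension are convex. -/
def QuasiconvexSol (n : ℕ) (Ω : Set (Euc n)) (u : Euc n → ℝ) : Prop :=
  ∀ t : ℝ, Convex ℝ {x : Euc n | extBy n Ω 0 u x ≤ t}

/-- The `k`-th elementary symmetric polynomial of a vector `a ∈ ℝⁿ`. -/
def esymmVec (n k : ℕ) (a : Fin n → ℝ) : ℝ :=
  ∑ s ∈ Finset.powersetCard k (Finset.univ : Finset (Fin n)), ∏ i ∈ s, a i

/-- `h_k(a) = max_i S_{k-1}(a)|_{a_i = 0} · a_i`. -/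
def hkfun (n k : ℕ) (a : Fin n → ℝ) : ℝ :=
  ⨆ i : Fin n, esymmVec n (k - 1) (Function.update a i 0) * a i

/-- The exponent `-k / (2 h_k(a))`. -/
def genExp (n k : ℕ) (a : Fin n → ℝ) : ℝ := -(k : ℝ) / (2 * hkfun n k a)

/-- The integrand `(1 + α t^{-k/(2h_k(a))})^{1/k}`. -/
def genInt (n k : ℕ) (a : Fin n → ℝ) (α t : ℝ) : ℝ :=
  (1 + α * t ^ genExp n k a) ^ ((1 : ℝ) / (k : ℝ))

/-- The generalized symmetric function `ū`. -/
def ubar (n k : ℕ) (a : Fin n → ℝ) (R₀ α : ℝ) (x : Euc n) : ℝ :=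
  ∫ t in R₀..(quadA n (Matrix.diagonal a) x), genInt n k a α t

/-- `μ(α) = ∫_{R₀}^∞ ((1 + α t^{-k/(2h_k(a))})^{1/k} - 1) dt - R₀`. -/
def muA (n k : ℕ) (a : Fin n → ℝ) (R₀ α : ℝ) : ℝ :=
  (∫ t in Set.Ioi R₀, (genInt n k a α t - 1)) - R₀

/-- The ellipsoid `E_R(xb) = {x : ½ (x - xb)ᵀ A (x - xb) < R}`. -/
def ESet (n : ℕ) (A : Matrix (Fin n) (Fin n) ℝ) (xb : Euc n) (R : ℝ) : Set (Euc n) :=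
  {x : Euc n | quadA n A (x - xb) < R}

/-- The non-concentric convex ring `Ω_R^ε = E_R(0) ∖ B̄_ε(x₀)`. -/
def OmegaRe (n : ℕ) (a : Fin n → ℝ) (x₀ : Euc n) (ε R : ℝ) : Set (Euc n) :=
  ESet n (Matrix.diagonal a) 0 R \ closure (Metric.ball x₀ ε)

/-- `u` is a `k`-convex solution of the approximating problem
`S_k(D²u) = 1` in `Ω_R^ε`, `u = 0` on `∂B_ε(x₀)`, `u = ū` on `∂E_R(0)`. -/
def ApproxSol (n k : ℕ) (a : Fin n → ℝ) (x₀ : Euc n) (ε R R₀ α : ℝ)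
    (u : Euc n → ℝ) : Prop :=
  SmoothOnNhd n u (closure (OmegaRe n a x₀ ε R)) ∧
  KConvexOn n k u (OmegaRe n a x₀ ε R) ∧
  (∀ x ∈ OmegaRe n a x₀ ε R, SkHess n k u x = 1) ∧
  (∀ x ∈ Metric.sphere x₀ ε, u x = 0) ∧
  (∀ x : Euc n, quadA n (Matrix.diagonal a) x = R → u x = ubar n k a R₀ α x)

/-- The constant `C_ε` of the boundary gradient estimate. -/
def Ceps (n k : ℕ) (C ε : ℝ) : ℝ :=
  if 2 * k < n then C * ((n : ℝ) / (k : ℝ) - 2) * ε⁻¹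
  else if 2 * k = n then C * ε⁻¹ * |Real.log ε|⁻¹
  else C * (2 - (n : ℝ) / (k : ℝ)) * ε ^ (1 - (n : ℝ) / (k : ℝ))

/-- `u` is a `k`-convex solution of the exterior Dirichlet problem
`S_k(D²u) = 1` in `ℝⁿ ∖ B̄_ε(x₀)`, `u = 0` on `∂B_ε(x₀)`, with quadratic asymptotics
`½ xᵀAx + c` at infinity (`A = diag a`). -/
def ExtBallSol (n k : ℕ) (a : Fin n → ℝ) (x₀ : Euc n) (ε c : ℝ) (u : Euc n → ℝ) : Prop :=
  SmoothOnNhd n u (Metric.ball x₀ ε)ᶜ ∧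
  KConvexOn n k u (closure (Metric.ball x₀ ε))ᶜ ∧
  (∀ x ∈ (closure (Metric.ball x₀ ε))ᶜ, SkHess n k u x = 1) ∧
  (∀ x ∈ Metric.sphere x₀ ε, u x = 0) ∧
  Tendsto (fun x : Euc n => u x - (quadA n (Matrix.diagonal a) x + c))
    (cocompact (Euc n)) (𝓝 0)

/-- `u` is a `k`-convex solution of the exterior Dirichlet problem on `ℝⁿ ∖ Ω₀` with
asymptotics `½ xᵀAx + b·x + c` at infinity. -/
def ExtDomSol (n k : ℕ) (Ω₀ : Set (Euc n)) (A : Matrix (Fin n) (Fin n) ℝ) (b : Euc n)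
    (c : ℝ) (u : Euc n → ℝ) : Prop :=
  SmoothOnNhd n u Ω₀ᶜ ∧
  KConvexOn n k u (closure Ω₀)ᶜ ∧
  (∀ x ∈ (closure Ω₀)ᶜ, SkHess n k u x = 1) ∧
  (∀ x ∈ frontier Ω₀, u x = 0) ∧
  Tendsto (fun x : Euc n => u x - (quadA n A x + linB n b x + c))
    (cocompact (Euc n)) (𝓝 0)

/-- `u` is a solution of the exterior Dirichlet problem for the Laplace equation
`Δu = 1` on `ℝⁿ ∖ Ω₀` with asymptotics `½ xᵀAx + b·x + c` at infinity. -/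
def ExtDomSolLap (n : ℕ) (Ω₀ : Set (Euc n)) (A : Matrix (Fin n) (Fin n) ℝ) (b : Euc n)
    (c : ℝ) (u : Euc n → ℝ) : Prop :=
  SmoothOnNhd n u Ω₀ᶜ ∧
  (∀ x ∈ (closure Ω₀)ᶜ, lapl n u x = 1) ∧
  (∀ x ∈ frontier Ω₀, u x = 0) ∧
  Tendsto (fun x : Euc n => u x - (quadA n A x + linB n b x + c))
    (cocompact (Euc n)) (𝓝 0)

/-- `u` solves the exterior problem `Δu = 0` in `ℝⁿ ∖ Ω̄`, `u = 1` on `∂Ω`,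
`u → 0` at infinity. -/
def HarmExtSol (n : ℕ) (Ω : Set (Euc n)) (u : Euc n → ℝ) : Prop :=
  SmoothOnNhd n u Ωᶜ ∧
  (∀ x ∈ (closure Ω)ᶜ, lapl n u x = 0) ∧
  (∀ x ∈ frontier Ω, u x = 1) ∧
  Tendsto u (cocompact (Euc n)) (𝓝 0)

end


open Polynomial in
lemma splits_derivative_real (p : ℝ[X]) (hp : p.Splits) : (derivative p).Splits := by
  by_cases h0 : p.natDegree = 0
  · rw [Polynomial.eq_C_of_natDegree_eq_zero h0]; simp
  rw [splits_iff_card_roots] at hp ⊢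
  have h1 := card_roots_le_derivative p
  have h2 := (derivative p).card_roots'
  have h3 := natDegree_derivative_lt h0
  omega

open Polynomial in
lemma splits_iter_derivative_real (p : ℝ[X]) (hp : p.Splits) (m : ℕ) :
    (derivative^[m] p).Splits := by
  induction m with
  | zero => simpa
  | succ m ih => rw [Function.iterate_succ_apply']; exact splits_derivative_real _ ih

open Polynomial in
/-- A real-rooted polynomial with positive leading coefficient, positive on `[t₀, ∞)`,
is nondecreasing there. -/
lemma splits_mono (p : ℝ[X]) (hp : p.Splits) (hl : 0 < p.leadingCoeff) (t₀ : ℝ)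
    (hpos : ∀ t, t₀ ≤ t → 0 < p.eval t) (t : ℝ) (ht : t₀ ≤ t) : p.eval t₀ ≤ p.eval t := by
  have hr : ∀ r ∈ p.roots, r < t₀ := by
    intro r hr
    by_contra h
    push Not at h
    have := hpos r h
    rw [(mem_roots'.1 hr).2] at this
    exact lt_irrefl _ this
  have he : ∀ s, p.eval s = p.leadingCoeff * (p.roots.map (fun r => s - r)).prod := by
    intro s
    conv_lhs => rw [hp.eq_prod_roots]
    rw [eval_mul, eval_C, eval_multiset_prod, Multiset.map_map]
    simp
  rw [he, he]
  apply mul_le_mul_of_nonneg_left _ hl.le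
  apply Multiset.prod_map_le_prod_map₀
  · intro r h; have := hr r h; linarith
  · intro r h; linarith

open Polynomial in
lemma poly_key (F G : ℝ[X]) (k : ℕ) (hFd : F.natDegree = k) (hFl : 0 < F.leadingCoeff)
    (hGd : G.natDegree < k) (hGl : 0 < G.leadingCoeff)
    (hs : ∀ τ : ℝ, (F + C τ * G).Splits) (hF : ∀ t, 0 ≤ t → 0 < F.eval t) :
    0 ≤ G.eval 0 := by
  by_contra hneg
  push Not at hneg
  have hG0 : G ≠ 0 := by rintro rfl; simp at hGl
  have hdeg : ∀ τ : ℝ, (C τ * G).degree < F.degree := by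
    intro τ
    apply degree_lt_degree
    exact lt_of_le_of_lt (natDegree_C_mul_le τ G) (by omega)
  have hlead : ∀ τ : ℝ, (F + C τ * G).leadingCoeff = F.leadingCoeff := fun τ =>
    leadingCoeff_add_of_degree_lt' (hdeg τ)
  have hFk : 0 < F.degree := natDegree_pos_iff_degree_pos.1 (by omega)
  have htend : ∀ τ : ℝ, Tendsto (fun t => (F + C τ * G).eval t) atTop atTop := by
    intro τ
    apply tendsto_atTop_of_leadingCoeff_nonneg
    · rw [degree_add_eq_left_of_degree_lt (hdeg τ)]; exact hFk
    · rw [hlead]; exact hFl.le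
  have hGdeg : 0 < G.natDegree := by
    by_contra h
    have h' : G.natDegree = 0 := by omega
    rw [eq_C_of_natDegree_eq_zero h'] at hneg hGl
    simp at hneg hGl
    linarith
  have hGt : Tendsto (fun t => G.eval t) atTop atTop :=
    tendsto_atTop_of_leadingCoeff_nonneg _ (natDegree_pos_iff_degree_pos.1 hGdeg) hGl.le
  -- the largest root
  have hex : ∃ t₀, 0 < t₀ ∧ G.eval t₀ = 0 ∧ ∀ t, t₀ < t → 0 < G.eval t := by
    have hroot : ∃ r ∈ G.roots.toFinset, 0 < r := by
      obtain ⟨T, hT⟩ := (hGt.eventually_gt_atTop 0).and (eventually_gt_atTop 0) |>.exists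
      have := intermediate_value_Icc hT.2.le (G.continuous.continuousOn (s := Set.Icc 0 T))
      obtain ⟨r, hr, hr0⟩ := this ⟨hneg.le, hT.1.le⟩
      refine ⟨r, ?_, ?_⟩
      · rw [Multiset.mem_toFinset, mem_roots hG0]; exact hr0
      · rcases hr.1.eq_or_lt with h | h
        · rw [← h] at hr0; simp only at hr0; linarith
        · exact h
    obtain ⟨r, hr, hrp⟩ := hroot
    have hne : G.roots.toFinset.Nonempty := ⟨r, hr⟩
    refine ⟨G.roots.toFinset.max' hne, lt_of_lt_of_le hrp (Finset.le_max' _ _ hr), ?_, ?_⟩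
    · have := Finset.max'_mem _ hne
      rw [Multiset.mem_toFinset, mem_roots hG0] at this; exact this
    · intro t ht
      by_contra hle
      push Not at hle
      obtain ⟨T, hT⟩ := (hGt.eventually_gt_atTop 0).and (eventually_gt_atTop t) |>.exists
      have := intermediate_value_Icc hT.2.le (G.continuous.continuousOn (s := Set.Icc t T))
      obtain ⟨r', hr', hr0⟩ := this ⟨hle, hT.1.le⟩
      have h1 : r' ∈ G.roots.toFinset := by
        rw [Multiset.mem_toFinset, mem_roots hG0]; exact hr0
      have := Finset.le_max' _ _ h1
      linarith [hr'.1]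
  obtain ⟨t₀, ht₀, hGt₀, hGpos⟩ := hex
  set c := F.eval t₀ with hc
  have hcpos : 0 < c := hF _ ht₀.le
  set S := (fun t => F.eval t / G.eval t) '' Set.Ioi t₀ with hS
  have hSne : S.Nonempty := ⟨_, t₀ + 1, by simp, rfl⟩
  have hSb : BddBelow S := ⟨0, by
    rintro _ ⟨t, ht, rfl⟩
    exact div_nonneg (hF _ (ht₀.trans ht).le).le (hGpos t ht).le⟩
  set m := sInf S with hm
  have hmle : ∀ t, t₀ < t → m ≤ F.eval t / G.eval t := fun t ht => csInf_le hSb ⟨t, ht, rfl⟩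
  have h1 : ∀ m' < m, ∀ t, t₀ ≤ t → c ≤ F.eval t - m' * G.eval t := by
    intro m' hm' t ht
    have := splits_mono (F + C (-m') * G) (hs _) (by rw [hlead]; exact hFl) t₀ (by
      intro s hs'
      rcases hs'.eq_or_lt with h | h
      · subst h; simp [hGt₀]; exact hcpos
      · have h2 := hGpos s h
        have h3 := lt_of_lt_of_le hm' (hmle s h)
        rw [lt_div_iff₀ h2] at h3
        simp; linarith) t ht
    simp [hGt₀] at this
    linarith
  have h2 : ∀ t, t₀ ≤ t → c ≤ F.eval t - m * G.eval t := by
    intro t ht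
    have hcont : Tendsto (fun m' => F.eval t - m' * G.eval t) (𝓝[<] m)
        (𝓝 (F.eval t - m * G.eval t)) := by
      apply Tendsto.mono_left _ nhdsWithin_le_nhds
      apply Continuous.tendsto; fun_prop
    apply ge_of_tendsto hcont
    filter_upwards [self_mem_nhdsWithin] with m' hm'
    exact h1 m' hm' t ht
  obtain ⟨T, hT⟩ := ((htend (-(m+1))).eventually_ge_atTop 0).and (eventually_ge_atTop t₀)
    |> eventually_atTop.1
  have hT1 := fun t ht => (hT t ht).1
  obtain ⟨K, hK⟩ := (isCompact_Icc (a := t₀) (b := T)).bddAbove_image (G.continuous.continuousOn)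
  have hK' : ∀ t, t₀ ≤ t → t ≤ T → G.eval t ≤ max K 1 := fun t h h' =>
    le_trans (hK ⟨t, ⟨h, h'⟩, rfl⟩) (le_max_left _ _)
  have hKp : 0 < max K 1 := lt_of_lt_of_le one_pos (le_max_right _ _)
  have h3 : min (m + 1) (m + c / max K 1) ≤ m := by
    rw [hm]
    apply le_csInf hSne
    rintro _ ⟨t, ht, rfl⟩
    have hg := hGpos t ht
    rcases le_total T t with h | h
    · refine (min_le_left _ _).trans ?_
      have := hT1 t h
      simp at this
      rw [le_div_iff₀ hg]; linarith
    · refine (min_le_right _ _).trans ?_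
      have := h2 t (le_of_lt ht)
      rw [le_div_iff₀ hg]
      have h4 : c / max K 1 * G.eval t ≤ c := by
        rw [div_mul_eq_mul_div, div_le_iff₀ hKp]
        exact mul_le_mul_of_nonneg_left (hK' t (le_of_lt ht) h) hcpos.le
      rw [add_mul]; linarith
  have : m < min (m + 1) (m + c / max K 1) := lt_min (by linarith) (by
    have := div_pos hcpos hKp; linarith)
  linarith


open Polynomial in
lemma charpoly_neg_eq (n : ℕ) (M : Matrix (Fin n) (Fin n) ℝ) :
    (-M).charpoly = (-1) ^ n * M.charpoly.comp (-X) := by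
  have : M.charpoly.comp (-X) = (M.charmatrix.map (fun p => p.comp (-X))).det := by
    rw [Matrix.charpoly]
    have := RingHom.map_det (Polynomial.compRingHom (-X : ℝ[X])) M.charmatrix
    simpa using this
  rw [this, Matrix.charpoly]
  have h2 : (-M).charmatrix = -(M.charmatrix.map (fun p => p.comp (-X))) := by
    ext1 i j
    by_cases h : i = j
    · subst h; simp [Matrix.charmatrix_apply]; ring
    · simp [Matrix.charmatrix_apply, h]
  rw [h2, Matrix.det_neg]; simp

open Polynomial in
lemma coeff_comp_negX (p : ℝ[X]) (m : ℕ) : (p.comp (-X)).coeff m = (-1) ^ m * p.coeff m := by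
  have : (-X : ℝ[X]) = C (-1) * X := by simp
  rw [this, comp_C_mul_X_coeff, mul_comm]

open Polynomial in
lemma matSk_eq (n j : ℕ) (hj : j ≤ n) (M : Matrix (Fin n) (Fin n) ℝ) :
    matSk n j M = ((-M).charpoly).coeff (n - j) := by
  rw [charpoly_neg_eq, matSk]
  have h1 : (((-1) ^ n : ℝ[X])) = C ((-1 : ℝ) ^ n) := by simp
  rw [h1, coeff_C_mul]
  rw [coeff_comp_negX]
  rw [← mul_assoc, ← pow_add]
  have : (-1 : ℝ) ^ (n + (n - j)) = (-1) ^ j := by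
    have h3 : n + (n - j) = j + 2 * (n - j) := by omega
    rw [h3, pow_add, pow_mul]; simp
  rw [this]

/-- Membership in the Gårding cone. -/
def GCone (n k : ℕ) (M : Matrix (Fin n) (Fin n) ℝ) : Prop :=
  ∀ j : ℕ, 1 ≤ j → j ≤ k → 0 < matSk n j M

open Polynomial in
lemma charpoly_single (n : ℕ) (B : Matrix (Fin n) (Fin n) ℝ) (i : Fin n) (τ : ℝ) :
    (-(B + τ • Matrix.single i i (1 : ℝ))).charpoly =
      (-B).charpoly + C τ * ((-B).charmatrix.updateRow i (Pi.single i 1)).det := by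
  have h : (-(B + τ • Matrix.single i i (1 : ℝ))).charmatrix =
      (-B).charmatrix.updateRow i ((-B).charmatrix i + C τ • Pi.single i 1) := by
    ext1 p q
    by_cases hp : p = i
    · subst hp
      by_cases hq : q = p
      · subst hq; simp [Matrix.charmatrix_apply]; ring
      · have hq' : p ≠ q := fun h => hq h.symm
        simp [Matrix.charmatrix_apply, hq, hq', Matrix.single]
    · have hp' : i ≠ p := fun h => hp h.symm
      simp [Matrix.charmatrix_apply, hp, hp', Matrix.single]
  rw [Matrix.charpoly, h, Matrix.det_updateRow_add, Matrix.det_updateRow_smul,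
    Matrix.updateRow_eq_self, Matrix.charpoly]

open Polynomial in
lemma coeff_iter_deriv_charpoly (n k m : ℕ) (hk : k ≤ n) (M : Matrix (Fin n) (Fin n) ℝ)
    (hm : m ≤ k) :
    (derivative^[n - k] (-M).charpoly).coeff m =
      ((m + (n - k)).descFactorial (n - k) : ℝ) * matSk n (k - m) M := by
  rw [coeff_iterate_derivative, matSk_eq n (k - m) (by omega) M]
  have : m + (n - k) = n - (k - m) := by omega
  rw [nsmul_eq_mul, this]

open Polynomial in
lemma matSk_zero (n : ℕ) (M : Matrix (Fin n) (Fin n) ℝ) : matSk n 0 M = 1 := by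
  have h := Matrix.charpoly_monic M
  have h2 := Matrix.charpoly_natDegree_eq_dim M
  rw [Monic, leadingCoeff, h2] at h
  simpa [matSk] using h

open Polynomial in
lemma matSk_one (n : ℕ) (hn : 1 ≤ n) (M : Matrix (Fin n) (Fin n) ℝ) :
    matSk n 1 M = M.trace := by
  have : Nonempty (Fin n) := ⟨⟨0, by omega⟩⟩
  have h := Matrix.trace_eq_neg_charpoly_coeff M
  rw [h]; simp [matSk]

open Polynomial in
lemma natDegree_iter_charpoly (n k : ℕ) (hk : k ≤ n) (M : Matrix (Fin n) (Fin n) ℝ) :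
    (derivative^[n - k] (-M).charpoly).natDegree = k ∧
      0 < (derivative^[n - k] (-M).charpoly).leadingCoeff := by
  have hc : 0 < (derivative^[n - k] (-M).charpoly).coeff k := by
    rw [coeff_iter_deriv_charpoly n k k hk M le_rfl, Nat.sub_self, matSk_zero, mul_one]
    exact_mod_cast Nat.pos_of_ne_zero (by
      rw [Ne, Nat.descFactorial_eq_zero_iff_lt]; omega)
  have hd : (derivative^[n - k] (-M).charpoly).natDegree = k := by
    apply le_antisymm
    · refine (natDegree_iterate_derivative _ _).trans ?_
      rw [Matrix.charpoly_natDegree_eq_dim]; simp; omega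
    · exact le_natDegree_of_ne_zero hc.ne'
  refine ⟨hd, ?_⟩
  rw [leadingCoeff, hd]; exact hc

open Polynomial in
lemma matSk_add_single (n k : ℕ) (hk1 : 1 ≤ k) (hk : k ≤ n) (B : Matrix (Fin n) (Fin n) ℝ)
    (hB : B.IsSymm) (hG : GCone n k B) (i : Fin n) (τ : ℝ) (hτ : 0 ≤ τ) :
    matSk n k B ≤ matSk n k (B + τ • Matrix.single i i (1 : ℝ)) := by
  set F := derivative^[n - k] (-B).charpoly with hF
  set G := derivative^[n - k] ((-B).charmatrix.updateRow i (Pi.single i 1)).det with hGd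
  have hsum : ∀ τ : ℝ, derivative^[n - k] (-(B + τ • Matrix.single i i (1 : ℝ))).charpoly
      = F + C τ * G := by
    intro τ
    rw [charpoly_single, iterate_map_add, iterate_derivative_C_mul]
  have hval : ∀ τ : ℝ, ((n - k).factorial : ℝ) * matSk n k (B + τ • Matrix.single i i (1 : ℝ))
      = F.eval 0 + τ * G.eval 0 := by
    intro τ
    have := coeff_iter_deriv_charpoly n k 0 hk (B + τ • Matrix.single i i (1 : ℝ)) (Nat.zero_le _)
    rw [hsum, coeff_zero_eq_eval_zero] at this
    simp only [Nat.zero_add, Nat.sub_zero, Nat.descFactorial_self, eval_add, eval_mul, eval_C]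
      at this
    linarith
  have hfac : (0 : ℝ) < (n - k).factorial := by exact_mod_cast Nat.factorial_pos _
  have hcoefG : ∀ m, k ≤ m → G.coeff m = 0 := by
    intro m hm
    have h1 : (F + C 1 * G).coeff m = F.coeff m := by
      rw [← hsum 1]
      rcases hm.eq_or_lt with h | h
      · subst h
        rw [hF, coeff_iter_deriv_charpoly n k k hk _ le_rfl,
          coeff_iter_deriv_charpoly n k k hk _ le_rfl]
        simp [matSk_zero]
      · rw [hF, coeff_eq_zero_of_natDegree_lt, coeff_eq_zero_of_natDegree_lt]
        · rw [(natDegree_iter_charpoly n k hk _).1]; exact h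
        · rw [(natDegree_iter_charpoly n k hk _).1]; exact h
    simpa using h1
  have hcG : 0 < G.coeff (k - 1) := by
    have h1 : (F + C 1 * G).coeff (k - 1) = F.coeff (k - 1) + 1 * G.coeff (k - 1) := by simp
    rw [← hsum 1, hF, coeff_iter_deriv_charpoly n k _ hk _ (by omega),
          coeff_iter_deriv_charpoly n k _ hk _ (by omega)] at h1
    have h2 : k - (k - 1) = 1 := by omega
    rw [h2, matSk_one n (by omega), matSk_one n (by omega)] at h1
    simp [Matrix.trace_add] at h1
    have h3 : (0 : ℝ) < ((k - 1 + (n - k)).descFactorial (n - k) : ℝ) := by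
      exact_mod_cast Nat.pos_of_ne_zero (by
        rw [Ne, Nat.descFactorial_eq_zero_iff_lt]; omega)
    linarith
  have hdG : G.natDegree = k - 1 := by
    apply le_antisymm
    · rw [natDegree_le_iff_coeff_eq_zero]
      intro m hm; exact hcoefG m (by omega)
    · exact le_natDegree_of_ne_zero hcG.ne'
  have hkey : 0 ≤ G.eval 0 := by
    apply poly_key F G k (natDegree_iter_charpoly n k hk B).1 (natDegree_iter_charpoly n k hk B).2
      (by omega) (by rw [leadingCoeff, hdG]; exact hcG)
    · intro τ
      rw [← hsum]
      apply splits_iter_derivative_real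
      apply Matrix.IsHermitian.splits_charpoly
      rw [Matrix.IsHermitian, Matrix.conjTranspose_eq_transpose_of_trivial]
      ext p q
      have := hB.apply p q
      simp [Matrix.single, this, and_comm]
    · intro t ht
      rw [eval_eq_sum_range, (natDegree_iter_charpoly n k hk B).1]
      have hnn : ∀ m ∈ Finset.range (k + 1), 0 ≤ F.coeff m * t ^ m := by
        intro m hm
        have hm' : m ≤ k := by simpa [Nat.lt_succ_iff] using hm
        apply mul_nonneg _ (pow_nonneg ht _)
        rw [hF, coeff_iter_deriv_charpoly n k m hk B hm']
        apply mul_nonneg (by positivity)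
        rcases Nat.eq_zero_or_pos (k - m) with h | h
        · rw [h, matSk_zero]; norm_num
        · exact (hG _ h (by omega)).le
      refine lt_of_lt_of_le ?_ (Finset.single_le_sum hnn (Finset.mem_range.2 (Nat.succ_pos k)))
      rw [hF, coeff_iter_deriv_charpoly n k 0 hk B (Nat.zero_le _)]
      simp only [pow_zero, mul_one, Nat.sub_zero, Nat.zero_add, Nat.descFactorial_self]
      exact mul_pos hfac (hG k hk1 le_rfl)
  have e0 := hval 0
  have e1 := hval τ
  simp only [zero_smul, add_zero, zero_mul] at e0
  have : ((n - k).factorial : ℝ) * matSk n k B ≤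
      ((n - k).factorial : ℝ) * matSk n k (B + τ • Matrix.single i i (1 : ℝ)) := by
    rw [e0, e1]
    have := mul_nonneg hτ hkey
    linarith
  exact le_of_mul_le_mul_left this hfac

lemma GCone.mono {n k j : ℕ} {B : Matrix (Fin n) (Fin n) ℝ} (h : GCone n k B) (hj : j ≤ k) :
    GCone n j B := fun i hi hij => h i hi (hij.trans hj)

lemma matSk_add_diag (n k : ℕ) (hk1 : 1 ≤ k) (hk : k ≤ n) (B : Matrix (Fin n) (Fin n) ℝ)
    (hB : B.IsSymm) (hG : GCone n k B) (p : Fin n → ℝ) (hp : ∀ i, 0 ≤ p i) :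
    matSk n k B ≤ matSk n k (B + Matrix.diagonal p) := by
  have key : ∀ s : Finset (Fin n),
      (B + ∑ i ∈ s, p i • Matrix.single i i (1 : ℝ)).IsSymm ∧
      ∀ j, 1 ≤ j → j ≤ k → matSk n j B ≤
        matSk n j (B + ∑ i ∈ s, p i • Matrix.single i i (1 : ℝ)) := by
    intro s
    induction s using Finset.induction_on with
    | empty => simp [hB]
    | insert i s hi ih =>
      obtain ⟨ih1, ih2⟩ := ih
      have e : B + ∑ i ∈ insert i s, p i • Matrix.single i i (1 : ℝ) =
        (B + ∑ i ∈ s, p i • Matrix.single i i (1 : ℝ)) + p i • Matrix.single i i (1 : ℝ) := by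
        rw [Finset.sum_insert hi]; abel
      rw [e]
      refine ⟨?_, ?_⟩
      · apply ih1.add
        apply Matrix.IsSymm.ext
        intro p q; simp [Matrix.single, and_comm]
      · intro j hj1 hjk
        refine (ih2 j hj1 hjk).trans ?_
        apply matSk_add_single n j hj1 (hjk.trans hk) _ ih1 _ i _ (hp i)
        intro l hl hlj
        exact lt_of_lt_of_le (hG l hl (hlj.trans hjk)) (ih2 l hl (hlj.trans hjk))
  have hd : Matrix.diagonal p = ∑ i, p i • Matrix.single i i (1 : ℝ) := by
    ext a b
    rw [Matrix.sum_apply]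
    by_cases h : a = b
    · subst h
      simp [Matrix.single]
    · rw [Matrix.diagonal_apply_ne _ h]
      symm; apply Finset.sum_eq_zero
      intro i _
      simp [Matrix.single]
      rintro rfl rfl; exact absurd rfl h
  rw [hd]
  exact (key Finset.univ).2 k hk1 le_rfl

lemma matSk_conj (n k : ℕ) (U M : Matrix (Fin n) (Fin n) ℝ) (h : U * U.transpose = 1) :
    matSk n k (U.transpose * M * U) = matSk n k M := by
  have h' := mul_eq_one_comm.1 h
  have := Matrix.charpoly_units_conj' (⟨U, U.transpose, h, h'⟩ : (Matrix (Fin n) (Fin n) ℝ)ˣ) M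
  rw [matSk, matSk]
  rw [← this]
  have e : U⁻¹ = U.transpose := Matrix.inv_eq_right_inv h
  simp only [e]

/-- Monotonicity of `S_k` on the Gårding cone. -/
lemma matSk_mono (n k : ℕ) (hk1 : 1 ≤ k) (hk : k ≤ n) (B D : Matrix (Fin n) (Fin n) ℝ)
    (hB : B.IsSymm) (hG : GCone n k B) (hP : (D - B).PosSemidef) :
    matSk n k B ≤ matSk n k D := by
  have hH := hP.1
  set U : Matrix (Fin n) (Fin n) ℝ := hH.eigenvectorUnitary.1 with hU
  have hUU : U * U.transpose = 1 := by
    have := hH.eigenvectorUnitary.2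
    rw [Unitary.mem_iff] at this
    have h2 := this.2
    rwa [Matrix.star_eq_conjTranspose, Matrix.conjTranspose_eq_transpose_of_trivial] at h2
  have hspec : U.transpose * (D - B) * U = Matrix.diagonal hH.eigenvalues := by
    have := hH.conjStarAlgAut_star_eigenvectorUnitary
    rw [Unitary.conjStarAlgAut_star_apply] at this
    rw [Matrix.star_eq_conjTranspose, Matrix.conjTranspose_eq_transpose_of_trivial] at this
    simpa using this
  rw [← matSk_conj n k U B hUU, ← matSk_conj n k U D hUU]
  have e : U.transpose * D * U = U.transpose * B * U + Matrix.diagonal hH.eigenvalues := by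
    rw [← hspec]; noncomm_ring
  rw [e]
  apply matSk_add_diag n k hk1 hk
  · rw [Matrix.IsSymm]
    simp [Matrix.transpose_mul, hB.eq, Matrix.mul_assoc]
  · intro j h1 h2
    rw [matSk_conj n j U B hUU]; exact hG j h1 h2
  · exact fun i => hH.posSemidef_iff_eigenvalues_nonneg.1 hP i


open Polynomial in
lemma esymmVec_coeff (n j : ℕ) (hj : j ≤ n) (d : Fin n → ℝ) :
    esymmVec n j d = (∏ i, (X + C (d i))).coeff (n - j) := by
  rw [Finset.prod_X_add_C_coeff _ _ (by simp), esymmVec]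
  simp only [Finset.card_univ, Fintype.card_fin]
  have : n - (n - j) = j := by omega
  rw [this]

open Polynomial in
lemma charpoly_rank_one (n : ℕ) (d v : Fin n → ℝ) (hd : ∀ i, 0 < d i) (c : ℝ) :
    X * (-(Matrix.diagonal d + c • Matrix.vecMulVec v v)).charpoly =
      X * ∏ i, (X + C (d i)) + ∑ i, C (c * v i ^ 2) * ∏ l, (X + C (Function.update d i 0 l)) := by
  apply Polynomial.eq_of_infinite_eval_eq
  apply Set.Infinite.mono _ (Set.Ioi_infinite (0 : ℝ))
  intro t ht
  have ht : 0 < t := ht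
  simp only [Set.mem_setOf_eq, eval_mul, eval_X, eval_add, eval_prod, eval_C, eval_finset_sum]
  rw [Matrix.eval_charpoly]
  have hne : ∀ i, t + d i ≠ 0 := fun i => (add_pos ht (hd i)).ne'
  have e1 : (Matrix.scalar (Fin n)) t - -(Matrix.diagonal d + c • Matrix.vecMulVec v v) =
      Matrix.diagonal (fun i => t + d i) +
        Matrix.replicateCol Unit (c • v) * Matrix.replicateRow Unit v := by
    ext p q
    rw [Matrix.add_apply, Matrix.mul_apply]
    by_cases h : p = q
    · subst h; simp [Matrix.vecMulVec_apply]; ring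
    · simp [Matrix.vecMulVec_apply, h]; ring
  have hunit : IsUnit (Matrix.diagonal (fun i => t + d i)).det := by
    rw [Matrix.det_diagonal, isUnit_iff_ne_zero]
    exact Finset.prod_ne_zero_iff.2 fun i _ => hne i
  have hinv : (Matrix.diagonal (fun i => t + d i))⁻¹ = Matrix.diagonal (fun i => (t + d i)⁻¹) := by
    apply Matrix.inv_eq_right_inv
    rw [Matrix.diagonal_mul_diagonal]
    simp [hne]
  rw [e1, Matrix.det_add_replicateCol_mul_replicateRow hunit, hinv, Matrix.det_diagonal]
  have e2 : (1 + Matrix.replicateRow Unit v * Matrix.diagonal (fun i => (t + d i)⁻¹) *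
      Matrix.replicateCol Unit (c • v)).det = 1 + ∑ i, c * v i ^ 2 * (t + d i)⁻¹ := by
    rw [Matrix.det_unique]
    simp [Matrix.mul_apply, Matrix.diagonal_apply]
    rw [Finset.mul_sum]
    apply Finset.sum_congr rfl; intro i _; ring
  rw [e2, mul_add, mul_one, mul_add, Finset.mul_sum, Finset.mul_sum]
  congr 1
  apply Finset.sum_congr rfl
  intro i _
  rw [← Finset.mul_prod_erase Finset.univ (fun l => t + d l) (Finset.mem_univ i),
    ← Finset.mul_prod_erase Finset.univ (fun l => t + Function.update d i 0 l) (Finset.mem_univ i)]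
  have e3 : ∏ l ∈ Finset.univ.erase i, (t + Function.update d i 0 l) =
      ∏ l ∈ Finset.univ.erase i, (t + d l) := by
    apply Finset.prod_congr rfl
    intro l hl
    rw [Function.update_of_ne (Finset.ne_of_mem_erase hl)]
  rw [e3]
  simp only [Function.update_self, add_zero]
  have := hne i
  field_simp

open Polynomial in
lemma matSk_rank_one (n j : ℕ) (hj1 : 1 ≤ j) (hj : j ≤ n) (d v : Fin n → ℝ) (hd : ∀ i, 0 < d i)
    (c : ℝ) :
    matSk n j (Matrix.diagonal d + c • Matrix.vecMulVec v v) =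
      esymmVec n j d + c * ∑ i, v i ^ 2 * esymmVec n (j - 1) (Function.update d i 0) := by
  have h := congrArg (fun p => p.coeff (n - j + 1)) (charpoly_rank_one n d v hd c)
  simp only [coeff_X_mul, coeff_add, finsetSum_coeff, coeff_C_mul] at h
  rw [matSk_eq n j hj, h, esymmVec_coeff n j hj, Finset.mul_sum]
  congr 1
  apply Finset.sum_congr rfl
  intro i _
  rw [esymmVec_coeff n (j - 1) (by omega)]
  have : n - (j - 1) = n - j + 1 := by omega
  rw [this]; ring

lemma matSk_diagonal (n j : ℕ) (hj : j ≤ n) (d : Fin n → ℝ) :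
    matSk n j (Matrix.diagonal d) = esymmVec n j d := by
  rw [matSk_eq n j hj, esymmVec_coeff n j hj, Matrix.diagonal_neg, Matrix.charpoly_diagonal]
  simp

open Polynomial in
lemma esymmVec_split (n j : ℕ) (hj1 : 1 ≤ j) (hj : j ≤ n) (d : Fin n → ℝ) (i : Fin n) :
    esymmVec n j d = esymmVec n j (Function.update d i 0) +
      d i * esymmVec n (j - 1) (Function.update d i 0) := by
  have h : X * ∏ l, (X + C (d l)) = (X + C (d i)) * ∏ l, (X + C (Function.update d i 0 l)) := by
    rw [← Finset.mul_prod_erase Finset.univ (fun l => X + C (d l)) (Finset.mem_univ i),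
      ← Finset.mul_prod_erase Finset.univ (fun l => X + C (Function.update d i 0 l))
        (Finset.mem_univ i)]
    have e3 : ∏ l ∈ Finset.univ.erase i, (X + C (Function.update d i 0 l)) =
        ∏ l ∈ Finset.univ.erase i, (X + C (d l)) := by
      apply Finset.prod_congr rfl
      intro l hl
      rw [Function.update_of_ne (Finset.ne_of_mem_erase hl)]
    rw [e3]
    simp only [Function.update_self, C_0, add_zero]
    ring
  have h := congrArg (fun p => p.coeff (n - j + 1)) h
  simp only [coeff_X_mul, add_mul, coeff_add, coeff_C_mul] at h
  rw [esymmVec_coeff n j hj, h, esymmVec_coeff n j hj, esymmVec_coeff n (j - 1) (by omega)]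
  have : n - (j - 1) = n - j + 1 := by omega
  rw [this]

lemma esymmVec_smul (n j : ℕ) (P : ℝ) (d : Fin n → ℝ) :
    esymmVec n j (fun i => P * d i) = P ^ j * esymmVec n j d := by
  unfold esymmVec
  rw [Finset.mul_sum]
  apply Finset.sum_congr rfl
  intro s hs
  rw [Finset.prod_mul_distrib, Finset.prod_const, (Finset.mem_powersetCard.1 hs).2]

lemma esymmVec_nonneg (n j : ℕ) (d : Fin n → ℝ) (hd : ∀ i, 0 ≤ d i) : 0 ≤ esymmVec n j d :=
  Finset.sum_nonneg fun _ _ => Finset.prod_nonneg fun i _ => hd i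

lemma esymmVec_pos (n j : ℕ) (hj : j ≤ n) (d : Fin n → ℝ) (hd : ∀ i, 0 < d i) :
    0 < esymmVec n j d := by
  apply Finset.sum_pos
  · exact fun _ _ => Finset.prod_pos fun i _ => hd i
  · apply Finset.powersetCard_nonempty.2; simpa

open Polynomial in
lemma logconc_prod {ι : Type*} (s : Finset ι) (b : ι → ℝ) (hb : ∀ i, 0 ≤ b i) :
    (∀ m, 0 ≤ (∏ l ∈ s, (1 + C (b l) * X)).coeff m) ∧
    ∀ i j, i ≤ j → (∏ l ∈ s, (1 + C (b l) * X)).coeff i * (∏ l ∈ s, (1 + C (b l) * X)).coeff (j + 2)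
      ≤ (∏ l ∈ s, (1 + C (b l) * X)).coeff (i + 1) *
        (∏ l ∈ s, (1 + C (b l) * X)).coeff (j + 1) := by
  induction s using Finset.induction_on with
  | empty =>
    refine ⟨fun m => ?_, fun i j h => ?_⟩
    · simp [coeff_one]; split_ifs <;> norm_num
    · simp [coeff_one]
  | insert l s hl ih =>
    rw [Finset.prod_insert hl]
    set Q := ∏ l ∈ s, (1 + C (b l) * X) with hQ
    obtain ⟨h0, h1⟩ := ih
    have c0 : ((1 + C (b l) * X) * Q).coeff 0 = Q.coeff 0 := by
      simp [add_mul, mul_assoc]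
    have cs : ∀ m, ((1 + C (b l) * X) * Q).coeff (m + 1) = Q.coeff (m + 1) + b l * Q.coeff m := by
      intro m
      simp [add_mul, mul_assoc, coeff_X_mul]
    have hx := hb l
    refine ⟨fun m => ?_, fun i j hij => ?_⟩
    · cases m with
      | zero => rw [c0]; exact h0 0
      | succ m => rw [cs]; exact add_nonneg (h0 _) (mul_nonneg hx (h0 _))
    · rw [cs (j + 1), cs j, cs i]
      cases i with
      | zero =>
        rw [c0]
        have a1 := h1 0 j hij
        have a2 : 0 ≤ Q.coeff 1 * Q.coeff j := mul_nonneg (h0 _) (h0 _)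
        have a3 : 0 ≤ Q.coeff 0 * Q.coeff j := mul_nonneg (h0 _) (h0 _)
        simp only [zero_add] at a1 ⊢
        nlinarith [mul_nonneg hx a2, mul_nonneg (mul_nonneg hx hx) a3]
      | succ i =>
        rw [cs i]
        obtain ⟨j, rfl⟩ : ∃ j', j = j' + 1 := ⟨j - 1, by omega⟩
        have a1 := h1 (i + 1) (j + 1) hij
        have a2 : Q.coeff i * Q.coeff (j + 1 + 2) ≤ Q.coeff (i + 1 + 1) * Q.coeff (j + 1) := by
          refine (h1 i (j + 1) (by omega)).trans ?_
          rcases hij.eq_or_lt with h | h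
          · have : i = j := by omega
            subst this; exact (mul_comm _ _).le
          · exact h1 (i + 1) j (by omega)
        have a3 := h1 i j (by omega)
        have b2 := mul_le_mul_of_nonneg_left a2 hx
        have b3 := mul_le_mul_of_nonneg_left a3 (mul_nonneg hx hx)
        have e1 : j + 1 + 1 + 1 = j + 1 + 2 := rfl
        have e2 : j + 1 + 1 = j + 2 := rfl
        rw [e1] at *
        rw [e2] at *
        linarith

open Polynomial in
lemma esymmVec_eq_coeff' (n m : ℕ) (b : Fin n → ℝ) :
    esymmVec n m b = (∏ l, (1 + C (b l) * X)).coeff m := by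
  rw [Finset.prod_one_add, finsetSum_coeff, esymmVec]
  rw [Finset.powersetCard_eq_filter, Finset.sum_filter]
  apply Finset.sum_congr rfl
  intro s _
  rw [Finset.prod_mul_distrib, Finset.prod_const, ← map_prod, coeff_C_mul, coeff_X_pow]
  simp [eq_comm]

lemma esymm_ratio (n j k : ℕ) (hj1 : 1 ≤ j) (hjk : j ≤ k) (hk : k ≤ n) (a : Fin n → ℝ)
    (ha : ∀ i, 0 < a i) (i : Fin n) :
    esymmVec n (j - 1) (Function.update a i 0) * esymmVec n k a ≤
      esymmVec n (k - 1) (Function.update a i 0) * esymmVec n j a := by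
  rw [esymmVec_split n k (by omega) hk a i, esymmVec_split n j hj1 (by omega) a i]
  rcases hjk.eq_or_lt with h | h
  · subst h; linarith
  have hb : ∀ l, 0 ≤ Function.update a i 0 l := by
    intro l
    by_cases h : l = i
    · subst h; simp
    · rw [Function.update_of_ne h]; exact (ha l).le
  have := (logconc_prod Finset.univ (Function.update a i 0) hb).2 (j - 1) (k - 2) (by omega)
  simp only [← esymmVec_eq_coeff'] at this
  have e1 : j - 1 + 1 = j := by omega
  have e2 : k - 2 + 1 = k - 1 := by omega
  have e3 : k - 2 + 2 = k := by omega
  rw [e1, e2, e3] at this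
  linarith

lemma hk_facts (n k : ℕ) (hn : 3 ≤ n) (hk1 : 1 ≤ k) (hkn : k ≤ n) (a : Fin n → ℝ)
    (ha : ∀ i, 0 < a i) (hS : esymmVec n k a = 1) (hk1' : k = 1 → (⨆ i, a i) < 1 / 2) :
    0 < hkfun n k a ∧ hkfun n k a < k / 2 ∧
      ∀ i, esymmVec n (k - 1) (Function.update a i 0) * a i ≤ hkfun n k a := by
  have hne : Nonempty (Fin n) := ⟨⟨0, by omega⟩⟩
  have hle : ∀ i, esymmVec n (k - 1) (Function.update a i 0) * a i ≤ hkfun n k a := fun i =>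
    le_ciSup (f := fun i => esymmVec n (k - 1) (Function.update a i 0) * a i)
      (Set.finite_range _).bddAbove i
  have hb : ∀ i l, 0 ≤ Function.update a i 0 l := by
    intro i l
    by_cases h : l = i
    · subst h; simp
    · rw [Function.update_of_ne h]; exact (ha l).le
  have hupos : ∀ i m, m + 1 ≤ n → 0 < esymmVec n m (Function.update a i 0) := by
    intro i m hm
    have hnn : ∀ s ∈ Finset.powersetCard m (Finset.univ : Finset (Fin n)),
      0 ≤ ∏ l ∈ s, Function.update a i 0 l := fun s _ => Finset.prod_nonneg fun l _ => hb i l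
    have hex : ∃ s ∈ Finset.powersetCard m (Finset.univ.erase i : Finset (Fin n)), True := by
      have : (Finset.powersetCard m (Finset.univ.erase i : Finset (Fin n))).Nonempty := by
        apply Finset.powersetCard_nonempty.2
        rw [Finset.card_erase_of_mem (Finset.mem_univ i)]; simp; omega
      obtain ⟨s, hs⟩ := this
      exact ⟨s, hs, trivial⟩
    obtain ⟨s, hs, -⟩ := hex
    rw [Finset.mem_powersetCard] at hs
    refine lt_of_lt_of_le ?_ (Finset.single_le_sum hnn
      (Finset.mem_powersetCard.2 ⟨Finset.subset_univ s, hs.2⟩))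
    apply Finset.prod_pos
    intro l hl
    rw [Function.update_of_ne (Finset.ne_of_mem_erase (hs.1 hl))]
    exact ha l
  refine ⟨?_, ?_, hle⟩
  · let i : Fin n := ⟨0, by omega⟩
    exact lt_of_lt_of_le (mul_pos (hupos i (k - 1) (by omega)) (ha i)) (hle i)
  · obtain ⟨i, hi⟩ := exists_eq_ciSup_of_finite
      (f := fun i => esymmVec n (k - 1) (Function.update a i 0) * a i)
    rw [hkfun, ← hi]
    have hsp := esymmVec_split n k hk1 hkn a i
    rw [hS] at hsp
    have h0 := esymmVec_nonneg n k _ (hb i)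
    rcases Nat.lt_or_ge k 3 with h3 | h3
    · rcases Nat.lt_or_ge k 2 with h2 | h2
      · have : k = 1 := by omega
        subst this
        have h5 := hk1' rfl
        have h6 : a i ≤ ⨆ i, a i := le_ciSup (Set.finite_range _).bddAbove i
        simp [esymmVec]
        linarith
      · have : k = 2 := by omega
        subst this
        have := hupos i 2 (by omega)
        push_cast
        linarith
    · have : (3 : ℝ) ≤ k := by exact_mod_cast h3
      linarith


/-- `φ` has second directional derivative `q` at `y` in direction `ξ`. -/
def Has2 (n : ℕ) (φ : Euc n → ℝ) (y ξ : Euc n) (q : ℝ) : Prop :=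
  ∃ f' : ℝ → ℝ, (∀ᶠ t in 𝓝 (0 : ℝ), HasDerivAt (fun t : ℝ => φ (y + t • ξ)) (f' t) t) ∧
    HasDerivAt f' q 0

lemma Has2.sub {n : ℕ} {φ ψ : Euc n → ℝ} {y ξ : Euc n} {p q : ℝ} (h1 : Has2 n φ y ξ p)
    (h2 : Has2 n ψ y ξ q) : Has2 n (fun x => φ x - ψ x) y ξ (p - q) := by
  obtain ⟨f, hf, hf'⟩ := h1
  obtain ⟨g, hg, hg'⟩ := h2
  refine ⟨fun t => f t - g t, ?_, hf'.sub hg'⟩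
  filter_upwards [hf, hg] with t a b
  exact a.sub b

lemma Has2.nonneg {n : ℕ} {φ : Euc n → ℝ} {y ξ : Euc n} {q : ℝ} (h : Has2 n φ y ξ q)
    (hm : IsLocalMin φ y) : 0 ≤ q := by
  obtain ⟨f', hf, hf'⟩ := h
  set f := fun t : ℝ => φ (y + t • ξ) with hfd
  have hmin : IsLocalMin f 0 := by
    have hc : ContinuousAt (fun t : ℝ => y + t • ξ) 0 := by fun_prop
    have : Tendsto (fun t : ℝ => y + t • ξ) (𝓝 0) (𝓝 y) := by
      have := hc.tendsto; simpa using this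
    have := this.eventually hm
    simpa [IsLocalMin, IsMinFilter, hfd] using this
  have hd : deriv f =ᶠ[𝓝 0] f' := by
    filter_upwards [hf] with t ht; exact ht.deriv
  have hdd : deriv (deriv f) 0 = q := by rw [hd.deriv_eq]; exact hf'.deriv
  by_contra hneg
  push Not at hneg
  have hmax : IsLocalMax f 0 := isLocalMax_of_deriv_deriv_neg (by rw [hdd]; exact hneg)
    hmin.deriv_eq_zero hf.self_of_nhds.continuousAt
  have hconst : f =ᶠ[𝓝 0] fun _ => f 0 := by
    filter_upwards [hmin, hmax] with t a b; exact le_antisymm b a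
  have h1 : deriv f =ᶠ[𝓝 0] deriv (fun _ => f 0) := hconst.deriv
  have : deriv (deriv f) 0 = 0 := by
    rw [h1.deriv_eq]; simp
  linarith

lemma euc_sum (n : ℕ) (ξ : Euc n) : ξ = ∑ i, ξ i • ebasis n i := by
  ext j
  simp [ebasis, Finset.sum_apply, Pi.single_apply]

lemma has2_smooth (n : ℕ) (u : Euc n → ℝ) (y ξ : Euc n) (hu : ContDiffAt ℝ 2 u y) :
    Has2 n u y ξ (∑ i, ∑ j, ξ i * hessMat n u y i j * ξ j) := by
  have hline : ∀ t : ℝ, HasDerivAt (fun t : ℝ => y + t • ξ) ξ t := by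
    intro t
    have := ((hasDerivAt_id t).smul_const ξ).const_add y
    simpa using this
  have hten : Tendsto (fun t : ℝ => y + t • ξ) (𝓝 0) (𝓝 y) := by
    have := (hline 0).continuousAt.tendsto; simpa using this
  refine ⟨fun t => fderiv ℝ u (y + t • ξ) ξ, ?_, ?_⟩
  · have h1 : ∀ᶠ x in 𝓝 y, ContDiffAt ℝ 2 u x := hu.eventually (by simp)
    filter_upwards [hten.eventually h1] with t ht
    exact (ht.differentiableAt (by norm_num)).hasFDerivAt.comp_hasDerivAt t (hline t)
  · have h1 : ContDiffAt ℝ 1 (fderiv ℝ u) y := hu.fderiv_right (by norm_num)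
    have h2 : DifferentiableAt ℝ (fderiv ℝ u) y := h1.differentiableAt (by norm_num)
    have h3 : HasFDerivAt (fderiv ℝ u) (fderiv ℝ (fderiv ℝ u) y) (y + (0 : ℝ) • ξ) := by
      rw [zero_smul, add_zero]; exact h2.hasFDerivAt
    have h4 : HasDerivAt (fun t : ℝ => fderiv ℝ u (y + t • ξ)) (fderiv ℝ (fderiv ℝ u) y ξ) 0 :=
      h3.comp_hasDerivAt (0 : ℝ) (hline 0)
    have h5 := h4.clm_apply (hasDerivAt_const (0 : ℝ) ξ)
    refine h5.congr_deriv ?_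
    rw [map_zero, add_zero]
    symm
    have e : ∀ i j, hessMat n u y i j = fderiv ℝ (fderiv ℝ u) y (ebasis n i) (ebasis n j) := by
      intro i j
      simp [hessMat, iteratedFDeriv_two_apply]
    simp only [e]
    conv_rhs => rw [euc_sum n ξ]
    simp only [map_sum, map_smul, ContinuousLinearMap.sum_apply, ContinuousLinearMap.smul_apply,
      smul_eq_mul, Finset.mul_sum]
    rw [Finset.sum_comm]
    apply Finset.sum_congr rfl; intro i _
    apply Finset.sum_congr rfl; intro j _
    ring

lemma hess_symm (n : ℕ) (u : Euc n → ℝ) (y : Euc n) (hu : ContDiffAt ℝ 2 u y) :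
    (hessMat n u y).IsSymm := by
  have := hu.isSymmSndFDerivAt (by simp)
  apply Matrix.IsSymm.ext
  intro i j
  simp only [hessMat, Matrix.of_apply, iteratedFDeriv_two_apply]
  exact this _ _

lemma d1_aux (b y ξ z t : ℝ) : HasDerivAt (fun t : ℝ => b * (y + t * ξ - z) ^ 2)
    (2 * (b * (y + t * ξ - z) * ξ)) t := by
  have h1 : HasDerivAt (fun t : ℝ => y + t * ξ - z) ξ t := by
    have := (((hasDerivAt_id' t).mul_const ξ).const_add y).sub_const z
    exact this.congr_deriv (by ring)
  have := (h1.fun_pow 2).const_mul b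
  exact this.congr_deriv (by push_cast; ring)

lemma d2_aux (b y ξ z t : ℝ) : HasDerivAt (fun t : ℝ => b * (y + t * ξ - z) * ξ)
    (b * ξ ^ 2) t := by
  have h1 : HasDerivAt (fun t : ℝ => y + t * ξ - z) ξ t := by
    have := (((hasDerivAt_id' t).mul_const ξ).const_add y).sub_const z
    exact this.congr_deriv (by ring)
  have := (h1.const_mul b).mul_const ξ
  exact this.congr_deriv (by ring)

lemma quad_d1 (n : ℕ) (b : Fin n → ℝ) (z y ξ : Euc n) (t : ℝ) :
    HasDerivAt (fun t : ℝ => (1 / 2) * ∑ i, b i * (y i + t * ξ i - z i) ^ 2)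
      (∑ i, b i * (y i + t * ξ i - z i) * ξ i) t := by
  have := (HasDerivAt.fun_sum (u := Finset.univ)
    (fun i _ => d1_aux (b i) (y i) (ξ i) (z i) t)).const_mul (1 / 2)
  refine this.congr_deriv ?_
  rw [← Finset.mul_sum]; ring

lemma quad_d2 (n : ℕ) (b : Fin n → ℝ) (z y ξ : Euc n) (t : ℝ) :
    HasDerivAt (fun t : ℝ => ∑ i, b i * (y i + t * ξ i - z i) * ξ i) (∑ i, b i * ξ i ^ 2) t :=
  HasDerivAt.fun_sum (u := Finset.univ) (fun i _ => d2_aux (b i) (y i) (ξ i) (z i) t)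

lemma has2_quad (n : ℕ) (b : Fin n → ℝ) (z y ξ : Euc n) :
    Has2 n (fun x => (1 / 2) * ∑ i, b i * (x i - z i) ^ 2) y ξ (∑ i, b i * ξ i ^ 2) :=
  ⟨fun t => ∑ i, b i * (y i + t * ξ i - z i) * ξ i,
    Eventually.of_forall fun t => quad_d1 n b z y ξ t, quad_d2 n b z y ξ 0⟩

lemma quadA_diag (n : ℕ) (a : Fin n → ℝ) (x : Euc n) :
    quadA n (Matrix.diagonal a) x = (1 / 2) * ∑ i, a i * x i ^ 2 := by
  unfold quadA
  congr 1
  apply Finset.sum_congr rfl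
  intro i _
  rw [Finset.sum_eq_single i]
  · simp; ring
  · intro j _ h; simp [Matrix.diagonal_apply_ne _ h.symm]
  · simp

lemma has2_comp (n : ℕ) (a : Fin n → ℝ) (y ξ : Euc n) (W w : ℝ → ℝ) (w' : ℝ)
    (hW : ∀ᶠ s in 𝓝 (quadA n (Matrix.diagonal a) y), HasDerivAt W (w s) s)
    (hw : HasDerivAt w w' (quadA n (Matrix.diagonal a) y)) :
    Has2 n (fun x => W (quadA n (Matrix.diagonal a) x)) y ξ
      (w (quadA n (Matrix.diagonal a) y) * (∑ i, a i * ξ i ^ 2) +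
        w' * (∑ i, a i * y i * ξ i) ^ 2) := by
  set Q := fun t : ℝ => quadA n (Matrix.diagonal a) (y + t • ξ) with hQ
  set Q' := fun t : ℝ => ∑ i, a i * (y i + t * ξ i) * ξ i with hQ'
  have hQ1 : ∀ t, HasDerivAt Q (Q' t) t := by
    intro t
    have := quad_d1 n a 0 y ξ t
    simp only [PiLp.zero_apply, sub_zero] at this
    have e : Q = fun t => (1 / 2) * ∑ i, a i * (y i + t * ξ i) ^ 2 := by
      ext t; simp [hQ, quadA_diag]
    rw [e]; exact this
  have hQ2 : HasDerivAt Q' (∑ i, a i * ξ i ^ 2) 0 := by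
    have := quad_d2 n a 0 y ξ 0
    simp only [PiLp.zero_apply, sub_zero] at this
    exact this
  have hQ0 : Q 0 = quadA n (Matrix.diagonal a) y := by simp [hQ]
  have hQ0' : Q' 0 = ∑ i, a i * y i * ξ i := by simp [hQ']
  refine ⟨fun t => w (Q t) * Q' t, ?_, ?_⟩
  · have : Tendsto Q (𝓝 0) (𝓝 (quadA n (Matrix.diagonal a) y)) := by
      rw [← hQ0]; exact (hQ1 0).continuousAt.tendsto
    filter_upwards [this.eventually hW] with t ht
    exact ht.comp t (hQ1 t)
  · rw [← hQ0] at hw ⊢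
    have := (hw.comp (0 : ℝ) (hQ1 0)).mul hQ2
    refine this.congr_deriv ?_
    rw [hQ0']; simp only [Function.comp]; ring

lemma posSemidef_of_forms (n : ℕ) (M N : Matrix (Fin n) (Fin n) ℝ) (hM : M.IsSymm) (hN : N.IsSymm)
    (h : ∀ ξ : Euc n, ∑ i, ∑ j, ξ i * N i j * ξ j ≤ ∑ i, ∑ j, ξ i * M i j * ξ j) :
    (M - N).PosSemidef := by
  apply Matrix.PosSemidef.of_dotProduct_mulVec_nonneg
  · rw [Matrix.IsHermitian, Matrix.conjTranspose_eq_transpose_of_trivial]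
    exact hM.sub hN
  · intro x
    have := h (WithLp.toLp 2 x)
    rw [← sub_nonneg, ← Finset.sum_sub_distrib] at this
    refine this.trans_eq ?_
    symm
    simp only [dotProduct, Matrix.mulVec]
    apply Finset.sum_congr rfl; intro i _
    rw [← Finset.sum_sub_distrib, Finset.mul_sum]
    apply Finset.sum_congr rfl; intro j _
    simp; ring

/-- Comparison at a touching point from below. -/
lemma touch_below (n k : ℕ) (hk1 : 1 ≤ k) (hk : k ≤ n) (u φ : Euc n → ℝ) (y : Euc n)
    (hu : ContDiffAt ℝ 2 u y) (M : Matrix (Fin n) (Fin n) ℝ) (hM : M.IsSymm) (hG : GCone n k M)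
    (hφ : ∀ ξ : Euc n, Has2 n φ y ξ (∑ i, ∑ j, ξ i * M i j * ξ j))
    (hmin : IsLocalMin (fun x => u x - φ x) y) : matSk n k M ≤ SkHess n k u y := by
  apply matSk_mono n k hk1 hk M _ hM hG
  apply posSemidef_of_forms n _ _ (hess_symm n u y hu) hM
  intro ξ
  have := ((has2_smooth n u y ξ hu).sub (hφ ξ)).nonneg hmin
  linarith

/-- Comparison at a touching point from above. -/
lemma touch_above (n k : ℕ) (hk1 : 1 ≤ k) (hk : k ≤ n) (u φ : Euc n → ℝ) (y : Euc n)
    (hu : ContDiffAt ℝ 2 u y) (M : Matrix (Fin n) (Fin n) ℝ) (hM : M.IsSymm)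
    (hG : GCone n k (hessMat n u y))
    (hφ : ∀ ξ : Euc n, Has2 n φ y ξ (∑ i, ∑ j, ξ i * M i j * ξ j))
    (hmin : IsLocalMin (fun x => φ x - u x) y) : SkHess n k u y ≤ matSk n k M := by
  apply matSk_mono n k hk1 hk _ M (hess_symm n u y hu) hG
  apply posSemidef_of_forms n _ _ hM (hess_symm n u y hu)
  intro ξ
  have := ((hφ ξ).sub (has2_smooth n u y ξ hu)).nonneg hmin
  linarith


lemma genInt_base_ge (n k : ℕ) (a : Fin n → ℝ) (α t : ℝ) (hα : 0 ≤ α) (ht : 0 ≤ t) :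
    1 ≤ 1 + α * t ^ genExp n k a := by
  have : 0 ≤ t ^ genExp n k a := Real.rpow_nonneg ht _
  nlinarith [mul_nonneg hα this]

lemma genInt_ge_one (n k : ℕ) (a : Fin n → ℝ) (α t : ℝ) (hα : 0 ≤ α) (ht : 0 ≤ t) :
    1 ≤ genInt n k a α t := by
  apply Real.one_le_rpow (genInt_base_ge n k a α t hα ht)
  positivity

lemma genInt_pow (n k : ℕ) (hk1 : 1 ≤ k) (a : Fin n → ℝ) (α t : ℝ) (hα : 0 ≤ α) (ht : 0 ≤ t) :
    genInt n k a α t ^ k = 1 + α * t ^ genExp n k a := by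
  have := genInt_base_ge n k a α t hα ht
  unfold genInt
  rw [one_div]
  exact Real.rpow_inv_natCast_pow (by linarith) (by omega)

lemma genInt_deriv (n k : ℕ) (hk1 : 1 ≤ k) (a : Fin n → ℝ) (α t : ℝ) (hα : 0 ≤ α) (ht : 0 < t)
    (hh : 0 < hkfun n k a) :
    ∃ w' : ℝ, HasDerivAt (genInt n k a α) w' t ∧ w' ≤ 0 ∧
      genInt n k a α t ^ k + w' * genInt n k a α t ^ (k - 1) * (2 * t * hkfun n k a) = 1 := by
  have hk0 : (0 : ℝ) < k := by exact_mod_cast hk1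
  have hb := genInt_base_ge n k a α t hα ht.le
  have h1 : HasDerivAt (fun t : ℝ => t ^ genExp n k a)
      (genExp n k a * t ^ (genExp n k a - 1)) t := Real.hasDerivAt_rpow_const (Or.inl ht.ne')
  have h2 : HasDerivAt (fun t : ℝ => 1 + α * t ^ genExp n k a)
      (α * (genExp n k a * t ^ (genExp n k a - 1))) t := (h1.const_mul α).const_add 1
  have h3 : HasDerivAt (genInt n k a α)
      (α * (genExp n k a * t ^ (genExp n k a - 1)) * ((1 : ℝ) / k) *
        (1 + α * t ^ genExp n k a) ^ ((1 : ℝ) / k - 1)) t :=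
    h2.rpow_const (Or.inl (by linarith))
  obtain ⟨w', hw'⟩ : ∃ w', w' = α * (genExp n k a * t ^ (genExp n k a - 1)) * ((1 : ℝ) / k) *
        (1 + α * t ^ genExp n k a) ^ ((1 : ℝ) / k - 1) := ⟨_, rfl⟩
  rw [← hw'] at h3
  refine ⟨w', h3, ?_, ?_⟩
  · rw [hw']
    have e1 : genExp n k a ≤ 0 := by
      unfold genExp; rw [neg_div]; have : 0 ≤ (k : ℝ) / (2 * hkfun n k a) := by positivity
      linarith
    have e2 : 0 ≤ t ^ (genExp n k a - 1) := by positivity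
    have e3 : 0 ≤ ((1 : ℝ) / k) * (1 + α * t ^ genExp n k a) ^ ((1 : ℝ) / k - 1) := by positivity
    have e4 : α * (genExp n k a * t ^ (genExp n k a - 1)) ≤ 0 :=
      mul_nonpos_of_nonneg_of_nonpos hα (mul_nonpos_of_nonpos_of_nonneg e1 e2)
    rw [mul_assoc]
    exact mul_nonpos_of_nonpos_of_nonneg e4 e3
  · -- differentiate the k-th power
    have h4 := h3.pow k
    have h5 : HasDerivAt (genInt n k a α ^ k)
        (α * (genExp n k a * t ^ (genExp n k a - 1))) t := by
      apply h2.congr_of_eventuallyEq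
      filter_upwards [lt_mem_nhds ht] with s hs
      exact genInt_pow n k hk1 a α s hα hs.le
    have h6 := h4.unique h5
    rw [genInt_pow n k hk1 a α t hα ht.le]
    have e5 : t ^ (genExp n k a - 1) * t = t ^ genExp n k a := by
      rw [Real.rpow_sub_one ht.ne']; field_simp
    have e6 : genExp n k a * (2 * hkfun n k a) = -k := by
      unfold genExp; field_simp
    have e7 : (k : ℝ) * (w' * genInt n k a α t ^ (k - 1) * (2 * t * hkfun n k a)) =
        (k : ℝ) * (-(α * t ^ genExp n k a)) := by
      calc _ = ((k : ℝ) * genInt n k a α t ^ (k - 1) * w') * (2 * t * hkfun n k a) := by ring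
        _ = α * (genExp n k a * t ^ (genExp n k a - 1)) * (2 * t * hkfun n k a) := by rw [h6]
        _ = α * (t ^ (genExp n k a - 1) * t) * (genExp n k a * (2 * hkfun n k a)) := by ring
        _ = _ := by rw [e5, e6]; ring
    have := mul_left_cancel₀ hk0.ne' e7
    linarith

lemma genInt_cont (n k : ℕ) (hk1 : 1 ≤ k) (a : Fin n → ℝ) (α : ℝ) (hα : 0 ≤ α)
    (hh : 0 < hkfun n k a) : ContinuousOn (genInt n k a α) (Set.Ioi 0) := by
  intro t ht
  obtain ⟨w', h, _⟩ := genInt_deriv n k hk1 a α t hα ht hh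
  exact h.continuousAt.continuousWithinAt

lemma genInt_ii (n k : ℕ) (hk1 : 1 ≤ k) (a : Fin n → ℝ) (α : ℝ) (hα : 0 ≤ α)
    (hh : 0 < hkfun n k a) (b c : ℝ) (hb : 0 < b) (hc : 0 < c) :
    IntervalIntegrable (genInt n k a α) volume b c := by
  apply ContinuousOn.intervalIntegrable
  apply (genInt_cont n k hk1 a α hα hh).mono
  intro x hx
  exact lt_of_lt_of_le (lt_min hb hc) hx.1

lemma W_deriv (n k : ℕ) (hk1 : 1 ≤ k) (a : Fin n → ℝ) (α R₀ s : ℝ) (hα : 0 ≤ α)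
    (hh : 0 < hkfun n k a) (hR : 0 < R₀) (hs : 0 < s) :
    HasDerivAt (fun s => ∫ t in R₀..s, genInt n k a α t) (genInt n k a α s) s := by
  apply intervalIntegral.integral_hasDerivAt_right
  · exact genInt_ii n k hk1 a α hα hh R₀ s hR hs
  · exact (genInt_cont n k hk1 a α hα hh).stronglyMeasurableAtFilter isOpen_Ioi s hs
  · exact (genInt_cont n k hk1 a α hα hh).continuousAt (Ioi_mem_nhds hs)

/-- The Hessian of `(1+δ) W(s(x))`. -/
lemma barM (n k : ℕ) (hk1 : 1 ≤ k) (hkn : k ≤ n) (a : Fin n → ℝ) (ha : ∀ i, 0 < a i)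
    (hS : esymmVec n k a = 1) (h : ℝ)
    (hle : ∀ i, esymmVec n (k - 1) (Function.update a i 0) * a i ≤ h)
    (y : Euc n) (s w w' δ : ℝ) (hs : s = (1 / 2) * ∑ i, a i * y i ^ 2) (hw1 : 1 ≤ w)
    (hw' : w' ≤ 0) (hδ : 0 < δ)
    (heq : w ^ k + w' * w ^ (k - 1) * (2 * s * h) = 1) (M : Matrix (Fin n) (Fin n) ℝ)
    (hM : M = Matrix.diagonal (fun i => ((1 + δ) * w) * a i) +
      ((1 + δ) * w') • Matrix.vecMulVec (fun i => a i * y i) (fun i => a i * y i)) :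
    GCone n k M ∧ 1 < matSk n k M := by
  have hd : ∀ i, 0 < ((1 + δ) * w) * a i := fun i => by
    have := ha i; positivity
  have hup : ∀ i, Function.update (fun i => ((1 + δ) * w) * a i) i 0 =
      fun l => ((1 + δ) * w) * (Function.update a i 0) l := by
    intro i; ext l
    by_cases hl : l = i
    · subst hl; simp
    · simp [Function.update_of_ne hl]
  -- key bound
  have hkey : w ^ (k - 1) * (w + w' * (2 * s * h)) = 1 := by
    have : w ^ k = w ^ (k - 1) * w := by rw [← pow_succ]; congr 1; omega
    rw [← heq, this]; ring
  have hwk : 0 < w ^ (k - 1) := by positivity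
  have hpos : 0 < w + w' * (2 * s * h) := by
    by_contra hc
    have := mul_nonpos_of_nonneg_of_nonpos hwk.le (not_lt.1 hc)
    linarith
  have hform : ∀ j, 1 ≤ j → j ≤ k →
      (1 + δ) ^ j * w ^ (j - 1) * (esymmVec n j a * (w + w' * (2 * s * h))) ≤ matSk n j M := by
    intro j hj1 hjk
    rw [hM, matSk_rank_one n j hj1 (by omega) _ _ hd, esymmVec_smul]
    simp only [hup, esymmVec_smul]
    have hsum : ∑ i, (a i * y i) ^ 2 * esymmVec n (j - 1) (Function.update a i 0) ≤
        esymmVec n j a * (2 * s * h) := by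
      have : esymmVec n j a * (2 * s * h) = ∑ i, (a i * y i ^ 2) * (esymmVec n j a * h) := by
        rw [← Finset.sum_mul, hs]; ring
      rw [this]
      apply Finset.sum_le_sum
      intro i _
      have r := esymm_ratio n j k hj1 hjk hkn a ha i
      rw [hS, mul_one] at r
      have e0 := esymmVec_nonneg n j a (fun i => (ha i).le)
      have r2 : esymmVec n (j - 1) (Function.update a i 0) * a i ≤ esymmVec n j a * h := by
        calc _ ≤ (esymmVec n (k - 1) (Function.update a i 0) * esymmVec n j a) * a i :=
              mul_le_mul_of_nonneg_right r (ha i).le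
          _ = esymmVec n j a * (esymmVec n (k - 1) (Function.update a i 0) * a i) := by ring
          _ ≤ _ := mul_le_mul_of_nonneg_left (hle i) e0
      calc _ = (a i * y i ^ 2) * (esymmVec n (j - 1) (Function.update a i 0) * a i) := by ring
        _ ≤ _ := mul_le_mul_of_nonneg_left r2 (by have := ha i; positivity)
    have hPj : ((1 + δ) * w) ^ j = ((1 + δ) * w) ^ (j - 1) * ((1 + δ) * w) := by
      rw [← pow_succ]; congr 1; omega
    have hδj : (1 + δ) ^ j = (1 + δ) ^ (j - 1) * (1 + δ) := by
      rw [← pow_succ]; congr 1; omega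
    have hsum2 : ∑ i, (a i * y i) ^ 2 *
        (((1 + δ) * w) ^ (j - 1) * esymmVec n (j - 1) (Function.update a i 0)) =
        ((1 + δ) * w) ^ (j - 1) *
          ∑ i, (a i * y i) ^ 2 * esymmVec n (j - 1) (Function.update a i 0) := by
      rw [Finset.mul_sum]; apply Finset.sum_congr rfl; intro i _; ring
    rw [hsum2, hPj, hδj, mul_pow]
    have hc : ((1 + δ) ^ (j - 1) * (1 + δ) * w ^ (j - 1)) * w' ≤ 0 :=
      mul_nonpos_of_nonneg_of_nonpos (by positivity) hw'
    have := mul_le_mul_of_nonpos_left hsum hc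
    linarith
  constructor
  · intro j hj1 hjk
    refine lt_of_lt_of_le ?_ (hform j hj1 hjk)
    have := esymmVec_pos n j (by omega) a ha
    positivity
  · refine lt_of_lt_of_le ?_ (hform k hk1 le_rfl)
    rw [hS, one_mul, mul_assoc, hkey, mul_one]
    exact one_lt_pow₀ (by linarith) (by omega)

/-- The barrier is a strict subsolution. -/
lemma has2_bar (n k : ℕ) (hk1 : 1 ≤ k) (a : Fin n → ℝ)
    (α R₀ δ c : ℝ) (hα : 0 ≤ α)
    (hh : 0 < hkfun n k a) (hR : 0 < R₀) (y : Euc n)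
    (hs : 0 < quadA n (Matrix.diagonal a) y) (w' : ℝ)
    (hw' : HasDerivAt (genInt n k a α) w' (quadA n (Matrix.diagonal a) y)) (ξ : Euc n) :
    Has2 n (fun x => (1 + δ) * ubar n k a R₀ α x - c) y ξ
      (∑ i, ∑ j, ξ i * (Matrix.diagonal (fun i =>
          ((1 + δ) * genInt n k a α (quadA n (Matrix.diagonal a) y)) * a i) +
      ((1 + δ) * w') • Matrix.vecMulVec (fun i => a i * y i) (fun i => a i * y i)) i j * ξ j) := by
  have h1 := has2_comp n a y ξ (fun s => (1 + δ) * (∫ t in R₀..s, genInt n k a α t) - c)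
    (fun s => (1 + δ) * genInt n k a α s) ((1 + δ) * w') (by
      filter_upwards [lt_mem_nhds hs] with s hs
      exact ((W_deriv n k hk1 a α R₀ s hα hh hR hs).const_mul (1 + δ)).sub_const c)
    (hw'.const_mul (1 + δ))
  refine Eq.subst (motive := fun q => Has2 n
    (fun x => (1 + δ) * ubar n k a R₀ α x - c) y ξ q) ?_ h1
  symm
  simp only [Matrix.add_apply, Matrix.smul_apply, Matrix.vecMulVec_apply, smul_eq_mul]
  rw [sq, Finset.sum_mul_sum, Finset.mul_sum, Finset.mul_sum, ← Finset.sum_add_distrib]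
  apply Finset.sum_congr rfl; intro i _
  simp only [mul_add, add_mul, Finset.sum_add_distrib]
  congr 1
  · rw [Finset.sum_eq_single i]
    · simp; ring
    · intro j _ hj; simp [Matrix.diagonal_apply_ne _ hj.symm]
    · simp
  · rw [← Finset.sum_add_distrib, Finset.mul_sum, Finset.mul_sum, ← Finset.sum_add_distrib]
    apply Finset.sum_congr rfl; intro j _
    ring

/-- no touching of the barrier from below by a solution. -/
lemma no_touch_bar (n k : ℕ) (hk1 : 1 ≤ k) (hkn : k ≤ n) (a : Fin n → ℝ) (ha : ∀ i, 0 < a i)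
    (hS : esymmVec n k a = 1) (hh : 0 < hkfun n k a)
    (hle : ∀ i, esymmVec n (k - 1) (Function.update a i 0) * a i ≤ hkfun n k a)
    (α R₀ δ c : ℝ) (hα : 0 ≤ α) (hR : 0 < R₀) (hδ : 0 < δ) (y : Euc n)
    (hs : 0 < quadA n (Matrix.diagonal a) y) (u : Euc n → ℝ) (hu : ContDiffAt ℝ 2 u y)
    (hu1 : SkHess n k u y = 1)
    (hmin : IsLocalMin (fun x => u x - ((1 + δ) * ubar n k a R₀ α x - c)) y) : False := by
  obtain ⟨w', h1, h2, h3⟩ := genInt_deriv n k hk1 a α _ hα hs hh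
  obtain ⟨hG, hlt⟩ := barM n k hk1 hkn a ha hS _ hle y _ _ w' δ (quadA_diag n a y)
    (genInt_ge_one n k a α _ hα hs.le) h2 hδ h3 _ rfl
  have := touch_below n k hk1 hkn u _ y hu _ ?_ hG
    (has2_bar n k hk1 a α R₀ δ c hα hh hR y hs w' h1) hmin
  · linarith
  · apply Matrix.IsSymm.ext
    intro i j
    simp only [Matrix.add_apply, Matrix.smul_apply, Matrix.vecMulVec_apply, smul_eq_mul]
    rcases eq_or_ne i j with hij | hij
    · subst hij; rfl
    · rw [Matrix.diagonal_apply_ne _ hij, Matrix.diagonal_apply_ne _ hij.symm]; ring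

lemma diag_form (n : ℕ) (b : Fin n → ℝ) (ξ : Euc n) :
    ∑ i, ∑ j, ξ i * (Matrix.diagonal b) i j * ξ j = ∑ i, b i * ξ i ^ 2 := by
  have := quadA_diag n b ξ
  unfold quadA at this
  linarith

lemma diag_symm (n : ℕ) (b : Fin n → ℝ) : (Matrix.diagonal b).IsSymm := Matrix.isSymm_diagonal b

lemma esymm_two (n k : ℕ) (hk1 : 1 ≤ k) (hkn : k ≤ n) : 1 < esymmVec n k (fun _ => (2 : ℝ)) := by
  unfold esymmVec
  rw [Finset.sum_congr rfl (g := fun _ => (2 : ℝ) ^ k)]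
  · rw [Finset.sum_const, Finset.card_powersetCard]
    simp only [Finset.card_univ, Fintype.card_fin, nsmul_eq_mul]
    have h1 : (1 : ℝ) ≤ n.choose k := by exact_mod_cast Nat.choose_pos hkn
    have h2 : (1 : ℝ) < 2 ^ k := one_lt_pow₀ (by norm_num) (by omega)
    nlinarith
  · intro s hs
    rw [Finset.prod_const, (Finset.mem_powersetCard.1 hs).2]

lemma no_touch_quad (n k : ℕ) (hk1 : 1 ≤ k) (hkn : k ≤ n) (x₀ : Euc n) (c : ℝ) (y : Euc n)
    (u : Euc n → ℝ) (hu : ContDiffAt ℝ 2 u y) (hu1 : SkHess n k u y = 1)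
    (hmin : IsLocalMin (fun x => u x - (‖x - x₀‖ ^ 2 - c)) y) : False := by
  have hG : ∀ j, 1 ≤ j → j ≤ k → 1 < matSk n j (Matrix.diagonal (fun _ : Fin n => (2 : ℝ))) := by
    intro j hj1 hjk
    rw [matSk_diagonal n j (by omega)]; exact esymm_two n j hj1 (by omega)
  have hφ : ∀ ξ : Euc n, Has2 n (fun x => ‖x - x₀‖ ^ 2 - c) y ξ
      (∑ i, ∑ j, ξ i * (Matrix.diagonal (fun _ : Fin n => (2 : ℝ))) i j * ξ j) := by
    intro ξ
    rw [diag_form]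
    obtain ⟨f, hf, hf'⟩ := has2_quad n (fun _ => (2 : ℝ)) x₀ y ξ
    refine ⟨f, ?_, hf'⟩
    filter_upwards [hf] with t ht
    refine (ht.sub_const c).congr_of_eventuallyEq (Eventually.of_forall fun t => ?_)
    show ‖y + t • ξ - x₀‖ ^ 2 - c = (1 / 2) * ∑ i, 2 * ((y + t • ξ) i - x₀ i) ^ 2 - c
    rw [EuclideanSpace.real_norm_sq_eq, Finset.mul_sum]
    congr 1
    apply Finset.sum_congr rfl; intro i _
    simp only [PiLp.sub_apply]; ring
  have := touch_below n k hk1 hkn u _ y hu _ (diag_symm n _)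
    (fun j h1 h2 => by linarith [hG j h1 h2]) hφ hmin
  linarith [hG k hk1 le_rfl]

lemma no_touch_up (n k : ℕ) (hk1 : 1 ≤ k) (hkn : k ≤ n) (a : Fin n → ℝ)
    (hS : esymmVec n k a = 1) (δ : ℝ) (hδ : 0 < δ) (hδ1 : δ < 1) (y : Euc n)
    (u : Euc n → ℝ) (hu : ContDiffAt ℝ 2 u y) (hu1 : SkHess n k u y = 1)
    (hG : GCone n k (hessMat n u y))
    (hmin : IsLocalMin (fun x => (1 - δ) * quadA n (Matrix.diagonal a) x - u x) y) : False := by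
  have hφ : ∀ ξ : Euc n, Has2 n (fun x => (1 - δ) * quadA n (Matrix.diagonal a) x) y ξ
      (∑ i, ∑ j, ξ i * (Matrix.diagonal (fun i => (1 - δ) * a i)) i j * ξ j) := by
    intro ξ
    rw [diag_form]
    have := has2_quad n (fun i => (1 - δ) * a i) 0 y ξ
    convert this using 1
    ext x
    rw [quadA_diag, Finset.mul_sum, Finset.mul_sum, Finset.mul_sum]
    apply Finset.sum_congr rfl; intro i _
    simp only [PiLp.zero_apply]; ring
  have := touch_above n k hk1 hkn u _ y hu _ (diag_symm n _) hG hφ hmin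
  rw [hu1, matSk_diagonal n k hkn, esymmVec_smul, hS, mul_one] at this
  have h2 : (1 - δ) ^ k < 1 := pow_lt_one₀ (by linarith) (by linarith) (by omega)
  linarith


lemma quadA_cont (n : ℕ) (a : Fin n → ℝ) : Continuous (quadA n (Matrix.diagonal a)) := by
  have : quadA n (Matrix.diagonal a) = fun x : Euc n => (1 / 2) * ∑ i, a i * x i ^ 2 := by
    ext x; exact quadA_diag n a x
  rw [this]; fun_prop

lemma quadA_nonneg (n : ℕ) (a : Fin n → ℝ) (ha : ∀ i, 0 < a i) (x : Euc n) :
    0 ≤ quadA n (Matrix.diagonal a) x := by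
  rw [quadA_diag]
  have : 0 ≤ ∑ i, a i * x i ^ 2 := Finset.sum_nonneg fun i _ => by
    have := ha i; positivity
  linarith

lemma quadA_lower (n : ℕ) (a : Fin n → ℝ) (m : ℝ) (hm : ∀ i, m ≤ a i) (x : Euc n) :
    m * ‖x‖ ^ 2 ≤ 2 * quadA n (Matrix.diagonal a) x := by
  rw [quadA_diag, EuclideanSpace.real_norm_sq_eq, Finset.mul_sum]
  have : ∑ i, m * x i ^ 2 ≤ ∑ i, a i * x i ^ 2 := Finset.sum_le_sum fun i _ =>
    mul_le_mul_of_nonneg_right (hm i) (sq_nonneg _)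
  linarith

lemma quadA_upper (n : ℕ) (a : Fin n → ℝ) (m : ℝ) (hm : ∀ i, a i ≤ m) (x : Euc n) :
    2 * quadA n (Matrix.diagonal a) x ≤ m * ‖x‖ ^ 2 := by
  rw [quadA_diag, EuclideanSpace.real_norm_sq_eq, Finset.mul_sum _ _ m]
  have : ∑ i, a i * x i ^ 2 ≤ ∑ i, m * x i ^ 2 := Finset.sum_le_sum fun i _ =>
    mul_le_mul_of_nonneg_right (hm i) (sq_nonneg _)
  linarith

lemma mem_omega (n : ℕ) (a : Fin n → ℝ) (x₀ : Euc n) (ε R : ℝ) (hε : 0 < ε) (y : Euc n) :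
    y ∈ OmegaRe n a x₀ ε R ↔ quadA n (Matrix.diagonal a) y < R ∧ ε < ‖y - x₀‖ := by
  unfold OmegaRe ESet
  rw [closure_ball _ hε.ne']
  simp [dist_eq_norm]

lemma omega_open (n : ℕ) (a : Fin n → ℝ) (x₀ : Euc n) (ε R : ℝ) (hε : 0 < ε) :
    IsOpen (OmegaRe n a x₀ ε R) := by
  have : OmegaRe n a x₀ ε R = {y | quadA n (Matrix.diagonal a) y < R} ∩ {y | ε < ‖y - x₀‖} := by
    ext y; rw [mem_omega n a x₀ ε R hε]; rfl
  rw [this]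
  exact (isOpen_lt (quadA_cont n a) continuous_const).inter
    (isOpen_lt continuous_const (by fun_prop))

lemma closure_omega (n : ℕ) (a : Fin n → ℝ) (x₀ : Euc n) (ε R : ℝ) (hε : 0 < ε) (y : Euc n)
    (hy : y ∈ closure (OmegaRe n a x₀ ε R)) :
    quadA n (Matrix.diagonal a) y ≤ R ∧ ε ≤ ‖y - x₀‖ := by
  have hc : IsClosed ({y | quadA n (Matrix.diagonal a) y ≤ R} ∩ {y | ε ≤ ‖y - x₀‖}) :=
    (isClosed_le (quadA_cont n a) continuous_const).inter
    (isClosed_le continuous_const (by fun_prop))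
  have hs : OmegaRe n a x₀ ε R ⊆
      ({y | quadA n (Matrix.diagonal a) y ≤ R} ∩ {y | ε ≤ ‖y - x₀‖}) := by
    intro z hz
    rw [mem_omega n a x₀ ε R hε] at hz
    exact ⟨hz.1.le, hz.2.le⟩
  exact closure_minimal hs hc hy

lemma omega_compact (n : ℕ) (a : Fin n → ℝ) (m : ℝ) (hm0 : 0 < m) (hm : ∀ i, m ≤ a i)
    (x₀ : Euc n) (ε R : ℝ) (hε : 0 < ε) : IsCompact (closure (OmegaRe n a x₀ ε R)) := by
  apply Metric.isCompact_of_isClosed_isBounded isClosed_closure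
  rw [isBounded_iff_forall_norm_le]
  refine ⟨1 + 2 * R / m, fun y hy => ?_⟩
  have h1 := (closure_omega n a x₀ ε R hε y hy).1
  have h2 := quadA_lower n a m hm y
  have h3 : ‖y‖ ^ 2 ≤ 2 * R / m := by
    rw [le_div_iff₀ hm0]; linarith
  nlinarith [sq_nonneg (‖y‖ - 1), norm_nonneg y]

lemma two_min {X : Type*} [TopologicalSpace X] (K₁ K₂ : Set X) (f₁ f₂ : X → ℝ)
    (h₁ : IsCompact K₁) (h₂ : IsCompact K₂) (c₁ : ContinuousOn f₁ K₁) (c₂ : ContinuousOn f₂ K₂)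
    (hneg : (∃ x ∈ K₁, f₁ x < 0) ∨ (∃ x ∈ K₂, f₂ x < 0)) :
    (∃ y ∈ K₁, f₁ y < 0 ∧ (∀ z ∈ K₁, f₁ y ≤ f₁ z) ∧ ∀ z ∈ K₂, f₁ y ≤ f₂ z) ∨
    (∃ y ∈ K₂, f₂ y < 0 ∧ (∀ z ∈ K₂, f₂ y ≤ f₂ z) ∧ ∀ z ∈ K₁, f₂ y ≤ f₁ z) := by
  rcases K₁.eq_empty_or_nonempty with e1 | n1
  · subst e1
    right
    obtain ⟨x, hx, hx'⟩ : ∃ x ∈ K₂, f₂ x < 0 := by simpa using hneg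
    obtain ⟨y, hy, hy'⟩ := h₂.exists_isMinOn ⟨x, hx⟩ c₂
    exact ⟨y, hy, lt_of_le_of_lt (hy' hx) hx', fun z hz => hy' hz, by simp⟩
  rcases K₂.eq_empty_or_nonempty with e2 | n2
  · subst e2
    left
    obtain ⟨x, hx, hx'⟩ : ∃ x ∈ K₁, f₁ x < 0 := by simpa using hneg
    obtain ⟨y, hy, hy'⟩ := h₁.exists_isMinOn ⟨x, hx⟩ c₁
    exact ⟨y, hy, lt_of_le_of_lt (hy' hx) hx', fun z hz => hy' hz, by simp⟩
  obtain ⟨y₁, hy₁, m₁⟩ := h₁.exists_isMinOn n1 c₁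
  obtain ⟨y₂, hy₂, m₂⟩ := h₂.exists_isMinOn n2 c₂
  have m₁' : ∀ z ∈ K₁, f₁ y₁ ≤ f₁ z := fun z hz => m₁ hz
  have m₂' : ∀ z ∈ K₂, f₂ y₂ ≤ f₂ z := fun z hz => m₂ hz
  have hn : f₁ y₁ < 0 ∨ f₂ y₂ < 0 := by
    rcases hneg with ⟨x, hx, hx'⟩ | ⟨x, hx, hx'⟩
    · left; linarith [m₁' x hx]
    · right; linarith [m₂' x hx]
  rcases le_total (f₁ y₁) (f₂ y₂) with h | h
  · left
    refine ⟨y₁, hy₁, ?_, m₁', fun z hz => h.trans (m₂' z hz)⟩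
    rcases hn with h' | h' <;> linarith
  · right
    refine ⟨y₂, hy₂, ?_, m₂', fun z hz => h.trans (m₁' z hz)⟩
    rcases hn with h' | h' <;> linarith

lemma smooth_facts (n : ℕ) (u : Euc n → ℝ) (S : Set (Euc n)) (h : SmoothOnNhd n u S) :
    ∀ y ∈ S, ContDiffAt ℝ 2 u y := by
  obtain ⟨U, hU, hS, hu⟩ := h
  intro y hy
  have := hu.contDiffAt (hU.mem_nhds (hS hy))
  refine this.of_le ?_
  have h : ((2 : ℕ∞) : WithTop ℕ∞) ≤ ((⊤ : ℕ∞) : WithTop ℕ∞) := WithTop.coe_le_coe.2 le_top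
  exact h

lemma W_mono (n k : ℕ) (hk1 : 1 ≤ k) (a : Fin n → ℝ) (α R₀ s : ℝ) (hα : 0 ≤ α)
    (hh : 0 < hkfun n k a) (hR : 0 < R₀) (hs : R₀ ≤ s) :
    s - R₀ ≤ ∫ t in R₀..s, genInt n k a α t := by
  have : ∫ t in R₀..s, (1 : ℝ) ≤ ∫ t in R₀..s, genInt n k a α t := by
    apply intervalIntegral.integral_mono_on hs (by simp)
      (genInt_ii n k hk1 a α hα hh R₀ s hR (by linarith))
    intro t ht
    exact genInt_ge_one n k a α t hα (by linarith [ht.1])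
  simpa using this

lemma ubar_cont (n k : ℕ) (hk1 : 1 ≤ k) (a : Fin n → ℝ) (α R₀ : ℝ) (hα : 0 ≤ α)
    (hh : 0 < hkfun n k a) (hR : 0 < R₀) (y : Euc n) (hy : 0 < quadA n (Matrix.diagonal a) y) :
    ContinuousAt (ubar n k a R₀ α) y :=
  ContinuousAt.comp (f := quadA n (Matrix.diagonal a))
    (g := fun s => ∫ t in R₀..s, genInt n k a α t)
    (W_deriv n k hk1 a α R₀ _ hα hh hR hy).continuousAt (quadA_cont n a).continuousAt

lemma lower_delta (n k : ℕ) (hk1 : 1 ≤ k) (hkn : k ≤ n) (a : Fin n → ℝ) (ha : ∀ i, 0 < a i)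
    (m : ℝ) (hm0 : 0 < m) (hm : ∀ i, m ≤ a i)
    (hS : esymmVec n k a = 1) (hh : 0 < hkfun n k a)
    (hle : ∀ i, esymmVec n (k - 1) (Function.update a i 0) * a i ≤ hkfun n k a)
    (α R₀ ε R V δ : ℝ) (hα : 0 ≤ α) (hR : 0 < R₀) (hRR : 3 * R₀ < R) (hε : 0 < ε) (x₀ : Euc n)
    (hin : ∀ x : Euc n, ‖x - x₀‖ = ε → quadA n (Matrix.diagonal a) x < R₀)
    (hV : ∀ x : Euc n, quadA n (Matrix.diagonal a) x ≤ 2 * R₀ → ‖x - x₀‖ ^ 2 - ε ^ 2 ≤ V)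
    (hW : V + 1 ≤ ∫ t in R₀..(2 * R₀), genInt n k a α t)
    (hδ : 0 < δ) (hδ1 : δ * (∫ t in R₀..R, genInt n k a α t) < 1)
    (u : Euc n → ℝ) (hu : ApproxSol n k a x₀ ε R R₀ α u) (x : Euc n)
    (hx : x ∈ closure (OmegaRe n a x₀ ε R)) :
    (quadA n (Matrix.diagonal a) x ≤ 2 * R₀ → ‖x - x₀‖ ^ 2 - ε ^ 2 ≤ u x) ∧
    (R₀ ≤ quadA n (Matrix.diagonal a) x →
      (1 + δ) * ubar n k a R₀ α x - δ * (∫ t in R₀..R, genInt n k a α t) ≤ u x) := by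
  obtain ⟨hsm, hkc, hsk, hb1, hb2⟩ := hu
  have hC2 := smooth_facts n u _ hsm
  obtain ⟨D, hD⟩ : ∃ D, D = ∫ t in R₀..R, genInt n k a α t := ⟨_, rfl⟩
  rw [← hD] at hδ1 ⊢
  have hD0 : 0 < D := by
    have := W_mono n k hk1 a α R₀ R hα hh hR (by linarith); rw [hD]; linarith
  have hqc := quadA_cont n a
  have hcomp := omega_compact n a m hm0 hm x₀ ε R hε
  have hop := omega_open n a x₀ ε R hε
  by_contra hcon
  have hneg : (∃ x ∈ closure (OmegaRe n a x₀ ε R) ∩ {x | quadA n (Matrix.diagonal a) x ≤ 2 * R₀},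
      u x - (‖x - x₀‖ ^ 2 - ε ^ 2) < 0) ∨
      (∃ x ∈ closure (OmegaRe n a x₀ ε R) ∩ {x | R₀ ≤ quadA n (Matrix.diagonal a) x},
      u x - ((1 + δ) * ubar n k a R₀ α x - δ * D) < 0) := by
    by_contra hc
    push Not at hc
    apply hcon
    refine ⟨fun h => ?_, fun h => ?_⟩
    · linarith [hc.1 x ⟨hx, h⟩]
    · linarith [hc.2 x ⟨hx, h⟩]
  have hucont : ∀ y ∈ closure (OmegaRe n a x₀ ε R), ContinuousAt u y :=
    fun y hy => (hC2 y hy).continuousAt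
  rcases two_min _ _ (fun x => u x - (‖x - x₀‖ ^ 2 - ε ^ 2))
    (fun x => u x - ((1 + δ) * ubar n k a R₀ α x - δ * D))
    (hcomp.inter_right (isClosed_le hqc continuous_const))
    (hcomp.inter_right (isClosed_le continuous_const hqc))
    (fun y hy => ((hucont y hy.1).sub
      (Continuous.continuousAt (by fun_prop))).continuousWithinAt)
    (fun y hy => ((hucont y hy.1).sub
      (((ubar_cont n k hk1 a α R₀ hα hh hR y (lt_of_lt_of_le hR hy.2)).const_mul (1 + δ)).sub
        continuousAt_const)).continuousWithinAt) hneg with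
    ⟨y, ⟨hy, hys⟩, hy0, hmin1, hmin2⟩ | ⟨y, ⟨hy, hys⟩, hy0, hmin1, hmin2⟩
  · obtain ⟨hyR, hyε⟩ := closure_omega n a x₀ ε R hε y hy
    simp only [Set.mem_ofPred_eq] at hys
    rcases hys.eq_or_lt with h | h
    · have := hmin2 y ⟨hy, by show R₀ ≤ _; rw [h]; linarith⟩
      have hv := hV y hys
      have hub : ubar n k a R₀ α y = ∫ t in R₀..(2 * R₀), genInt n k a α t := by
        unfold ubar; rw [h]
      have hv0 : 0 ≤ ‖y - x₀‖ ^ 2 - ε ^ 2 := by nlinarith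
      rw [hub] at this
      nlinarith
    rcases hyε.eq_or_lt with h' | h'
    · have e := hb1 y (by rw [mem_sphere_iff_norm]; exact h'.symm)
      rw [e, ← h'] at hy0; linarith
    have hyO : y ∈ OmegaRe n a x₀ ε R := (mem_omega n a x₀ ε R hε y).2 ⟨by linarith, h'⟩
    apply no_touch_quad n k hk1 hkn x₀ (ε ^ 2) y u (hC2 y hy) (hsk y hyO)
    filter_upwards [hop.mem_nhds hyO, (isOpen_lt hqc continuous_const).mem_nhds h] with z hz1 hz2
    exact hmin1 z ⟨subset_closure hz1, le_of_lt hz2⟩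
  · obtain ⟨hyR, hyε⟩ := closure_omega n a x₀ ε R hε y hy
    simp only [Set.mem_ofPred_eq] at hys
    rcases hys.eq_or_lt with h | h
    · have := hmin2 y ⟨hy, by show _ ≤ 2 * R₀; rw [← h]; linarith⟩
      have hub : ubar n k a R₀ α y = 0 := by
        unfold ubar; rw [← h]; simp
      have hv0 : 0 ≤ ‖y - x₀‖ ^ 2 - ε ^ 2 := by nlinarith
      rw [hub] at this
      nlinarith
    rcases hyε.eq_or_lt with h' | h'
    · have := hin y h'.symm; linarith
    rcases hyR.eq_or_lt with h'' | h''
    · have e := hb2 y h''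
      have hub : ubar n k a R₀ α y = D := by
        unfold ubar; rw [h'', hD]
      rw [e, hub] at hy0; linarith
    have hyO : y ∈ OmegaRe n a x₀ ε R := (mem_omega n a x₀ ε R hε y).2 ⟨h'', h'⟩
    apply no_touch_bar n k hk1 hkn a ha hS hh hle α R₀ δ (δ * D) hα hR hδ y (by linarith) u
      (hC2 y hy) (hsk y hyO)
    filter_upwards [hop.mem_nhds hyO, (isOpen_lt continuous_const hqc).mem_nhds h] with z hz1 hz2
    exact hmin1 z ⟨subset_closure hz1, le_of_lt hz2⟩

lemma lower_bound (n k : ℕ) (hk1 : 1 ≤ k) (hkn : k ≤ n) (a : Fin n → ℝ) (ha : ∀ i, 0 < a i)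
    (m : ℝ) (hm0 : 0 < m) (hm : ∀ i, m ≤ a i)
    (hS : esymmVec n k a = 1) (hh : 0 < hkfun n k a)
    (hle : ∀ i, esymmVec n (k - 1) (Function.update a i 0) * a i ≤ hkfun n k a)
    (α R₀ ε R V : ℝ) (hα : 0 ≤ α) (hR : 0 < R₀) (hRR : 3 * R₀ < R) (hε : 0 < ε) (x₀ : Euc n)
    (hin : ∀ x : Euc n, ‖x - x₀‖ = ε → quadA n (Matrix.diagonal a) x < R₀)
    (hV : ∀ x : Euc n, quadA n (Matrix.diagonal a) x ≤ 2 * R₀ → ‖x - x₀‖ ^ 2 - ε ^ 2 ≤ V)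
    (hW : V + 1 ≤ ∫ t in R₀..(2 * R₀), genInt n k a α t)
    (u : Euc n → ℝ) (hu : ApproxSol n k a x₀ ε R R₀ α u) (x : Euc n)
    (hx : x ∈ OmegaRe n a x₀ ε R) : ubar n k a R₀ α x ≤ u x := by
  have key := fun δ h1 h2 => lower_delta n k hk1 hkn a ha m hm0 hm hS hh hle α R₀ ε R V δ hα hR hRR
    hε x₀ hin hV hW h1 h2 u hu x (subset_closure hx)
  obtain ⟨D, hD⟩ : ∃ D, D = ∫ t in R₀..R, genInt n k a α t := ⟨_, rfl⟩
  rw [← hD] at key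
  have hD0 : 0 < D := by
    have := W_mono n k hk1 a α R₀ R hα hh hR (by linarith); rw [hD]; linarith
  have hδ : ∀ η : ℝ, 0 < η → 0 < min (1 / 2) η / D ∧ min (1 / 2) η / D * D < 1 ∧
      min (1 / 2) η / D * D ≤ η := by
    intro η hη
    have h0 : 0 < min (1 / 2) η := lt_min (by norm_num) hη
    rw [div_mul_cancel₀ _ hD0.ne']
    exact ⟨div_pos h0 hD0, lt_of_le_of_lt (min_le_left _ _) (by norm_num), min_le_right _ _⟩
  rcases le_or_gt R₀ (quadA n (Matrix.diagonal a) x) with h | h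
  · apply le_of_forall_pos_le_add
    intro η hη
    obtain ⟨d1, d2, d3⟩ := hδ η hη
    have := (key _ d1 d2).2 h
    have hub : 0 ≤ ubar n k a R₀ α x := by
      have := W_mono n k hk1 a α R₀ _ hα hh hR h
      unfold ubar; linarith
    nlinarith [mul_nonneg d1.le hub]
  · obtain ⟨d1, d2, d3⟩ := hδ 1 one_pos
    have h1 := (key _ d1 d2).1 (by linarith)
    have h2 := ((mem_omega n a x₀ ε R hε x).1 hx).2
    have h3 : ubar n k a R₀ α x ≤ 0 := by
      unfold ubar
      rw [intervalIntegral.integral_symm]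
      have : 0 ≤ ∫ t in (quadA n (Matrix.diagonal a) x)..R₀, genInt n k a α t := by
        apply intervalIntegral.integral_nonneg h.le
        intro t ht
        have := genInt_ge_one n k a α t hα ((quadA_nonneg n a ha x).trans ht.1)
        linarith
      linarith
    nlinarith

lemma W_le_mu (n k : ℕ) (hk1 : 1 ≤ k) (a : Fin n → ℝ) (α R₀ s : ℝ) (hα : 0 ≤ α)
    (hh : 0 < hkfun n k a) (hh2 : hkfun n k a < k / 2) (hR : 0 < R₀) (hs : R₀ ≤ s) :
    ∫ t in R₀..s, genInt n k a α t ≤ s + muA n k a R₀ α := by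
  have hp : genExp n k a < -1 := by
    unfold genExp
    rw [neg_div, neg_lt_neg_iff, lt_div_iff₀ (by positivity)]; linarith
  have hnn : ∀ t, R₀ < t → 0 ≤ genInt n k a α t - 1 := fun t ht => by
    linarith [genInt_ge_one n k a α t hα (by linarith)]
  have hintegr : IntegrableOn (fun t => genInt n k a α t - 1) (Set.Ioi R₀) := by
    have h1 : IntegrableOn (fun t : ℝ => α * t ^ genExp n k a) (Set.Ioi R₀) :=
      (integrableOn_Ioi_rpow_of_lt hp hR).const_mul α
    refine Integrable.mono' h1 ?_ ?_
    · apply ContinuousOn.aestronglyMeasurable _ measurableSet_Ioi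
      exact ((genInt_cont n k hk1 a α hα hh).mono
        (Set.Ioi_subset_Ioi hR.le)).sub continuousOn_const
    · refine (ae_restrict_iff' measurableSet_Ioi).2 (Eventually.of_forall fun t ht => ?_)
      have ht' : R₀ < t := ht
      rw [Real.norm_of_nonneg (hnn t ht')]
      have hb := genInt_base_ge n k a α t hα (by linarith)
      have : genInt n k a α t ≤ 1 + α * t ^ genExp n k a := by
        unfold genInt
        have hk0 : (1 : ℝ) ≤ k := by exact_mod_cast hk1
        calc _ ≤ (1 + α * t ^ genExp n k a) ^ (1 : ℝ) :=
              Real.rpow_le_rpow_of_exponent_le hb (by rw [div_le_one (by linarith)]; exact hk0)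
          _ = _ := Real.rpow_one _
      linarith
  have h1 : ∫ t in R₀..s, genInt n k a α t = (∫ t in R₀..s, (genInt n k a α t - 1)) + (s - R₀) := by
    rw [intervalIntegral.integral_sub (genInt_ii n k hk1 a α hα hh R₀ s hR (by linarith)) (by simp)]
    simp
  have h2 : ∫ t in R₀..s, (genInt n k a α t - 1) ≤ ∫ t in Set.Ioi R₀, (genInt n k a α t - 1) := by
    rw [intervalIntegral.integral_of_le hs]
    apply setIntegral_mono_set hintegr
    · exact (ae_restrict_iff' measurableSet_Ioi).2 (Eventually.of_forall fun t ht => hnn t ht)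
    · exact (Set.Ioc_subset_Ioi_self).eventuallyLE
  unfold muA
  linarith

lemma upper_bound (n k : ℕ) (hk1 : 1 ≤ k) (hkn : k ≤ n) (a : Fin n → ℝ) (ha : ∀ i, 0 < a i)
    (m : ℝ) (hm0 : 0 < m) (hm : ∀ i, m ≤ a i)
    (hS : esymmVec n k a = 1)
    (α R₀ ε R μ : ℝ) (hR : 0 < R) (hε : 0 < ε) (x₀ : Euc n) (hμ : 0 ≤ μ)
    (hW : ∫ t in R₀..R, genInt n k a α t ≤ R + μ)
    (u : Euc n → ℝ) (hu : ApproxSol n k a x₀ ε R R₀ α u) (x : Euc n)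
    (hx : x ∈ OmegaRe n a x₀ ε R) : u x ≤ quadA n (Matrix.diagonal a) x + μ := by
  obtain ⟨hsm, hkc, hsk, hb1, hb2⟩ := hu
  have hC2 := smooth_facts n u _ hsm
  have hqc := quadA_cont n a
  have hcomp := omega_compact n a m hm0 hm x₀ ε R hε
  have hop := omega_open n a x₀ ε R hε
  have key : ∀ δ : ℝ, 0 < δ → δ < 1 → u x - (1 - δ) * quadA n (Matrix.diagonal a) x ≤ μ + δ * R := by
    intro δ hδ hδ1
    obtain ⟨y, hy, hmin⟩ := hcomp.exists_isMinOn ⟨x, subset_closure hx⟩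
      (f := fun x => (1 - δ) * quadA n (Matrix.diagonal a) x - u x)
      (fun y hy => ((hqc.continuousAt.const_mul (1 - δ)).sub
        (hC2 y hy).continuousAt).continuousWithinAt)
    have hmin' : ∀ z ∈ closure (OmegaRe n a x₀ ε R),
      (1 - δ) * quadA n (Matrix.diagonal a) y - u y ≤
        (1 - δ) * quadA n (Matrix.diagonal a) z - u z := fun z hz => hmin hz
    have hmx := hmin' x (subset_closure hx)
    obtain ⟨hyR, hyε⟩ := closure_omega n a x₀ ε R hε y hy
    rcases hyε.eq_or_lt with h' | h'
    · have e := hb1 y (by rw [mem_sphere_iff_norm]; exact h'.symm)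
      have h1 := quadA_nonneg n a ha y
      have h2 : 0 ≤ (1 - δ) * quadA n (Matrix.diagonal a) y := mul_nonneg (by linarith) h1
      have h3 : 0 < δ * R := mul_pos hδ hR
      linarith
    rcases hyR.eq_or_lt with h'' | h''
    · have e := hb2 y h''
      unfold ubar at e
      rw [h''] at e hmx
      linarith
    exfalso
    have hyO : y ∈ OmegaRe n a x₀ ε R := (mem_omega n a x₀ ε R hε y).2 ⟨h'', h'⟩
    apply no_touch_up n k hk1 hkn a hS δ hδ hδ1 y u (hC2 y hy) (hsk y hyO) (hkc y hyO)
    filter_upwards [hop.mem_nhds hyO] with z hz1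
    exact hmin' z (subset_closure hz1)
  apply le_of_forall_pos_le_add
  intro η hη
  have h0 : 0 < min (1 / 2) (η / R) := lt_min (by norm_num) (by positivity)
  have := key _ h0 (lt_of_le_of_lt (min_le_left _ _) (by norm_num))
  have h2 : min (1 / 2) (η / R) * R ≤ η := by
    rw [← le_div_iff₀ hR]; exact min_le_right _ _
  have h3 := mul_nonneg h0.le (quadA_nonneg n a ha x)
  linarith


lemma W_large (n k : ℕ) (hk1 : 1 ≤ k) (a : Fin n → ℝ) (α R₀ V : ℝ)
    (hh : 0 < hkfun n k a) (hR : 0 < R₀) (hV : 0 ≤ V)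
    (hα : ((V + 1) / R₀) ^ k / (2 * R₀) ^ genExp n k a ≤ α) :
    V + 1 ≤ ∫ t in R₀..(2 * R₀), genInt n k a α t := by
  have hα0 : 0 ≤ α := le_trans (by positivity) hα
  have hp : genExp n k a ≤ 0 := by
    unfold genExp; rw [neg_div]
    have : 0 ≤ (k : ℝ) / (2 * hkfun n k a) := by positivity
    linarith
  have hb : ∀ t ∈ Set.Icc R₀ (2 * R₀), (V + 1) / R₀ ≤ genInt n k a α t := by
    intro t ht
    have ht0 : 0 < t := lt_of_lt_of_le hR ht.1
    have h1 := genInt_ge_one n k a α t hα0 ht0.le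
    have h2 := genInt_pow n k hk1 a α t hα0 ht0.le
    rw [← pow_le_pow_iff_left₀ (by positivity) (by linarith) (by omega : k ≠ 0), h2]
    rw [div_le_iff₀ (by positivity)] at hα
    have h3 : (2 * R₀) ^ genExp n k a ≤ t ^ genExp n k a :=
      Real.rpow_le_rpow_of_nonpos ht0 ht.2 hp
    have h4 := mul_le_mul_of_nonneg_left h3 hα0
    linarith
  have : ∫ t in R₀..(2 * R₀), (V + 1) / R₀ ≤ ∫ t in R₀..(2 * R₀), genInt n k a α t :=
    intervalIntegral.integral_mono_on (by linarith) (by simp)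
      (genInt_ii n k hk1 a α hα0 hh _ _ hR (by linarith)) hb
  rw [intervalIntegral.integral_const, smul_eq_mul] at this
  have e : (2 * R₀ - R₀) * ((V + 1) / R₀) = V + 1 := by field_simp; ring
  linarith

/-- Lemma 2.2: uniform `C⁰` estimate
`ū ≤ u^{ε,R} ≤ ½xᵀAx + μ(α)` in `Ω_R^ε`. -/
theorem statement4 (n k : ℕ) (hn : 3 ≤ n) (hk1 : 1 ≤ k) (hkn : k ≤ n)
    (a : Fin n → ℝ) (hA : MemA n k (Matrix.diagonal a))
    (hk1' : k = 1 → (⨆ i, a i) < 1 / 2) :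
    ∃ Λ₀ : ℝ, 0 < Λ₀ ∧ ∀ R₀ : ℝ, Λ₀ ≤ R₀ →
      ∃ α₀ : ℝ, 0 < α₀ ∧ ∀ α : ℝ, α₀ ≤ α →
        ∀ x₀ : Euc n, x₀ ∈ Metric.ball (0 : Euc n) (1 / 2) → x₀ ≠ 0 →
        ∀ ε : ℝ, 0 < ε → ε < 1 / 2 →
        ∀ R : ℝ, 3 * R₀ < R →
        ∀ u : Euc n → ℝ, ApproxSol n k a x₀ ε R R₀ α u →
        ∀ x ∈ OmegaRe n a x₀ ε R,
          ubar n k a R₀ α x ≤ u x ∧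
          u x ≤ quadA n (Matrix.diagonal a) x + muA n k a R₀ α := by
  obtain ⟨_, hpd, hSk⟩ := hA
  have ha : ∀ i, 0 < a i := Matrix.posDef_diagonal_iff.1 hpd
  have hS : esymmVec n k a = 1 := by rw [← matSk_diagonal n k hkn]; exact hSk
  obtain ⟨hh, hh2, hle⟩ := hk_facts n k hn hk1 hkn a ha hS hk1'
  have hne : Nonempty (Fin n) := ⟨⟨0, by omega⟩⟩
  obtain ⟨i₀, hi₀⟩ := Finite.exists_min a
  have hm0 := ha i₀
  have hsum : ∀ i, a i ≤ ∑ j, a j := fun i =>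
    Finset.single_le_sum (fun j _ => (ha j).le) (Finset.mem_univ i)
  have hsum0 : 0 < ∑ j, a j := lt_of_lt_of_le (ha i₀) (hsum i₀)
  refine ⟨1 + ∑ j, a j, by linarith, fun R₀ hR₀ => ?_⟩
  have hR : 0 < R₀ := by linarith
  obtain ⟨V, hVdef⟩ : ∃ V, V = 8 * R₀ / a i₀ + 1 + 2 * R₀ := ⟨_, rfl⟩
  have hV0 : 2 * R₀ ≤ V := by
    have : 0 ≤ 8 * R₀ / a i₀ := by positivity
    linarith
  refine ⟨((V + 1) / R₀) ^ k / (2 * R₀) ^ genExp n k a, ?_, ?_⟩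
  · have : 0 < V + 1 := by linarith
    positivity
  intro α hα x₀ hx₀ _ ε hε hε1 R hRR u hu x hx
  have hα0 : 0 ≤ α := by
    have : 0 < V + 1 := by linarith
    exact le_trans (by positivity) hα
  have hx₀' : ‖x₀‖ < 1 / 2 := by simpa using hx₀
  have hWV := W_large n k hk1 a α R₀ V hh hR (by linarith) hα
  constructor
  · refine lower_bound n k hk1 hkn a ha (a i₀) hm0 hi₀ hS hh hle α R₀ ε R V hα0 hR hRR hε x₀
      ?_ ?_ hWV u hu x hx
    · intro z hz
      have h1 : ‖z‖ ≤ 1 := by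
        have := norm_add_le (z - x₀) x₀
        rw [sub_add_cancel] at this
        linarith
      have h2 := quadA_upper n a _ hsum z
      have h3 : ‖z‖ ^ 2 ≤ 1 := pow_le_one₀ (norm_nonneg _) h1
      nlinarith
    · intro z hz
      have h1 := quadA_lower n a _ hi₀ z
      have h2 : ‖z‖ ^ 2 ≤ 4 * R₀ / a i₀ := by
        rw [le_div_iff₀ hm0]; linarith
      have h3 := norm_sub_le z x₀
      have h4 : ‖z - x₀‖ ^ 2 ≤ (‖z‖ + ‖x₀‖) ^ 2 := pow_le_pow_left₀ (norm_nonneg _) h3 2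
      have h5 : ‖x₀‖ ^ 2 ≤ 1 / 4 := by nlinarith [norm_nonneg x₀]
      have h6 : 8 * R₀ / a i₀ = 2 * (4 * R₀ / a i₀) := by ring
      nlinarith [sq_nonneg (‖z‖ - ‖x₀‖), sq_nonneg ε]
  · refine upper_bound n k hk1 hkn a ha (a i₀) hm0 hi₀ hS α R₀ ε R _ (by linarith) hε x₀
      ?_ (W_le_mu n k hk1 a α R₀ R hα0 hh hh2 hR (by linarith)) u hu x hx
    have := W_le_mu n k hk1 a α R₀ (2 * R₀) hα0 hh hh2 hR (by linarith)
    linarith
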